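/- arXiv:2412.09316 — 3 statements merged into one kernel-verified Lean document; each statement's English description precedes it below -/
import Mathlib

section
/- Let D ⊆ ℝ^d be compact and convex, and let ν be a probability measure on D that is absolutely continuous with respect to Lebesgue measure. If ρ is an extreme point of the set F_ν of fusions of ν and ρ has finite support, then there exists a finite partition P of D into convex sets such that, for each B ∈ P, the restriction ρ|_B is dominated by ν|_B in the convex order and ρ|_B has affinely independent support. -/
open MeasureTheory Set Filter Topology
open scoped ENNReal NNReal

noncomputable section

/-- Euclidean space `ℝ^d`. -/
abbrev Euc (d : ℕ) : Type := EuclideanSpace ℝ (Fin d)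

/-- `ρ ⪯ μ` in the convex order: `∫ ψ dρ ≤ ∫ ψ dμ` for every convex function `ψ` for which
both integrals exist. -/
def ConvexOrderLE {d : ℕ} (ρ μ : Measure (Euc d)) : Prop :=
  ∀ ψ : Euc d → ℝ, ConvexOn ℝ Set.univ ψ → Integrable ψ μ → Integrable ψ ρ →
    ∫ x, ψ x ∂ρ ≤ ∫ x, ψ x ∂μ

/-- The set of fusions of `ν`: probability measures supported on `D` that are dominated by `ν`
in the convex order. -/
def fusions {d : ℕ} (D : Set (Euc d)) (ν : Measure (Euc d)) : Set (Measure (Euc d)) :=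
  {ρ | IsProbabilityMeasure ρ ∧ ρ Dᶜ = 0 ∧ ConvexOrderLE ρ ν}

/-- The (topological) support of a measure. -/
def msupport {d : ℕ} (ρ : Measure (Euc d)) : Set (Euc d) := {x | ∀ U ∈ nhds x, ρ U ≠ 0}

/-- Laguerre cell of site `x_i` with weight `g_i` inside the domain `D`. -/
def LaguerreCell {d n : ℕ} (D : Set (Euc d)) (X : Fin n → Euc d) (g : Fin n → ℝ)
    (i : Fin n) : Set (Euc d) :=
  {y ∈ D | ∀ j, ‖y - X i‖ ^ 2 - g i ≤ ‖y - X j‖ ^ 2 - g j}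

/-- Parameters of affine functions on `ℝ^d`. -/
abbrev AffP (d : ℕ) : Type := (Euc d →L[ℝ] ℝ) × ℝ

/-- Evaluation of an affine function. -/
def ev {d : ℕ} (v : AffP d) (y : Euc d) : ℝ := v.1 y + v.2

lemma ev_continuous {d : ℕ} : Continuous (fun z : AffP d × Euc d => ev z.1 z.2) := by
  unfold ev; fun_prop

lemma ev_add {d : ℕ} (v w : AffP d) (y : Euc d) : ev (v + w) y = ev v y + ev w y := by
  simp [ev]; ring

lemma ev_sub {d : ℕ} (v w : AffP d) (y : Euc d) : ev (v - w) y = ev v y - ev w y := by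
  simp [ev]; ring

lemma ev_smul {d : ℕ} (r : ℝ) (v : AffP d) (y : Euc d) : ev (r • v) y = r * ev v y := by
  simp [ev]; ring

lemma ev_zero {d : ℕ} (y : Euc d) : ev (0 : AffP d) y = 0 := by
  simp [ev]

lemma ev_cont {d : ℕ} (v : AffP d) : Continuous (ev v) := by
  unfold ev; fun_prop

lemma ev_combo {d : ℕ} (v : AffP d) (x y : Euc d) (a b : ℝ) (hab : a + b = 1) :
    ev v (a • x + b • y) = a * ev v x + b * ev v y := by
  simp only [ev, map_add, map_smul, smul_eq_mul]
  linear_combination (-v.2) * hab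

lemma ev_convexOn {d : ℕ} (v : AffP d) : ConvexOn ℝ univ (ev v) :=
  ⟨convex_univ, fun x _ y _ a b _ _ hab => (ev_combo v x y a b hab).le⟩

/-- Domination of the finitely supported measure `∑ p x δ_x` by `ν|_C`. -/
def Dom {d : ℕ} (ν : Measure (Euc d)) (p : Euc d → ℝ) (G : Finset (Euc d)) (C : Set (Euc d)) :
    Prop :=
  ∀ ψ : Euc d → ℝ, ConvexOn ℝ univ ψ → ∑ x ∈ G, p x * ψ x ≤ ∫ y in C, ψ y ∂ν

lemma convexOn_sup' {d : ℕ} {ι : Type*} (G : Finset ι) (hG : G.Nonempty) (f : ι → Euc d → ℝ)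
    (hf : ∀ i ∈ G, ConvexOn ℝ univ (f i)) :
    ConvexOn ℝ univ (fun y => G.sup' hG (fun i => f i y)) := by
  refine ⟨convex_univ, fun x _ y _ a b ha hb hab => ?_⟩
  refine Finset.sup'_le _ _ fun i hi => ?_
  refine ((hf i hi).2 (mem_univ x) (mem_univ y) ha hb hab).trans ?_
  simp only [smul_eq_mul]
  gcongr
  · exact Finset.le_sup' (fun i => f i x) hi
  · exact Finset.le_sup' (fun i => f i y) hi

lemma convexOn_cont {d : ℕ} {ψ : Euc d → ℝ} (h : ConvexOn ℝ univ ψ) : Continuous ψ :=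
  h.locallyLipschitz.continuous

lemma integrable_of_cont {d : ℕ} {D : Set (Euc d)} (hD : IsCompact D) (μ : Measure (Euc d))
    [IsFiniteMeasure μ] (hμ : μ Dᶜ = 0) {ψ : Euc d → ℝ} (h : Continuous ψ) : Integrable ψ μ := by
  have h1 : IntegrableOn ψ D μ := h.continuousOn.integrableOn_compact hD
  have h2 : μ.restrict D = μ := Measure.restrict_eq_self_of_ae_mem (by
    rw [ae_iff]; exact hμ)
  rwa [IntegrableOn, h2] at h1

/-- The linear functional. -/
def Lf {d : ℕ} (G : Finset (Euc d)) (m : Euc d → ℝ) (u : Euc d → AffP d) : ℝ :=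
  ∑ x ∈ G, m x * ev (u x) x

/-- The support functional. -/
def Hf {d : ℕ} (ν : Measure (Euc d)) (C : Set (Euc d)) (G : Finset (Euc d)) (hG : G.Nonempty)
    (u : Euc d → AffP d) : ℝ :=
  ∫ y in C, G.sup' hG (fun x => ev (u x) y) ∂ν

lemma Lf_le_Hf {d : ℕ} {ν : Measure (Euc d)} {p : Euc d → ℝ} {C : Set (Euc d)}
    {G : Finset (Euc d)} (hG : G.Nonempty) (hp : ∀ x ∈ G, 0 ≤ p x) (h : Dom ν p G C)
    (u : Euc d → AffP d) : Lf G p u ≤ Hf ν C G hG u := by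
  refine le_trans ?_ (h _ (convexOn_sup' G hG (fun x => ev (u x)) (fun i _ => ev_convexOn _)))
  refine Finset.sum_le_sum fun x hx => ?_
  exact mul_le_mul_of_nonneg_left (Finset.le_sup' (fun i => ev (u i) x) hx) (hp x hx)

lemma Dom_affine {d : ℕ} {ν : Measure (Euc d)} {p : Euc d → ℝ} {C : Set (Euc d)}
    {G : Finset (Euc d)} (h : Dom ν p G C) (v : AffP d) :
    ∑ x ∈ G, p x * ev v x = ∫ y in C, ev v y ∂ν := by
  refine le_antisymm (h _ (ev_convexOn v)) ?_
  have := h _ (ev_convexOn (-v))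
  have e : ∀ y, ev (-v) y = - ev v y := fun y => by simp [ev]; ring
  simp only [e, mul_neg, Finset.sum_neg_distrib, integral_neg] at this
  linarith

lemma Dom_of_Lf {d : ℕ} {D : Set (Euc d)} (hD : IsCompact D) {ν : Measure (Euc d)}
    [IsFiniteMeasure ν] (hνD : ν Dᶜ = 0) {m : Euc d → ℝ} {C : Set (Euc d)}
    {G : Finset (Euc d)} (hG : G.Nonempty)
    (h : ∀ u : Euc d → AffP d, Lf G m u ≤ Hf ν C G hG u) : Dom ν m G C := by
  intro ψ hψ
  have hc := convexOn_cont hψ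
  have key : ∀ δ : ℝ, 0 < δ → ∑ x ∈ G, m x * ψ x - δ * ∑ x ∈ G, m x ≤ ∫ y in C, ψ y ∂ν := by
    intro δ hδ
    have hex : ∀ x : Euc d, ∃ v : AffP d, (∀ y, ev v y ≤ ψ y) ∧ ev v x = ψ x - δ := by
      intro x
      obtain ⟨l, c, h1, h2⟩ := ConvexOn.exists_affine_le_of_lt (𝕜 := ℝ) (s := univ) (φ := ψ)
        (x := x) (a := ψ x - δ) (mem_univ x) (by linarith) isClosed_univ
        (hc.lowerSemicontinuous.lowerSemicontinuousOn _) hψ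
      refine ⟨(l, c), fun y => ?_, by simpa [ev] using h2⟩
      have := h1 ⟨y, mem_univ y⟩
      simpa [ev] using this
    choose u hu1 hu2 using hex
    have h1 := h u
    have h2 : Lf G m u = ∑ x ∈ G, m x * ψ x - δ * ∑ x ∈ G, m x := by
      simp only [Lf, hu2, mul_sub, Finset.sum_sub_distrib, Finset.mul_sum]
      congr 1
      exact Finset.sum_congr rfl fun _ _ => mul_comm _ _
    rw [← h2]
    refine h1.trans ?_
    refine integral_mono (Integrable.restrict ?_) (Integrable.restrict ?_) ?_
    · exact integrable_of_cont hD ν hνD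
        (convexOn_cont (convexOn_sup' G hG (fun x => ev (u x)) (fun i _ => ev_convexOn _)))
    · exact integrable_of_cont hD ν hνD hc
    · intro y
      exact Finset.sup'_le _ _ fun x _ => hu1 x y
  have ht : Tendsto (fun δ : ℝ => ∑ x ∈ G, m x * ψ x - δ * ∑ x ∈ G, m x) (𝓝[>] 0)
      (𝓝 (∑ x ∈ G, m x * ψ x - 0 * ∑ x ∈ G, m x)) := by
    refine Tendsto.mono_left ?_ nhdsWithin_le_nhds
    exact Continuous.tendsto (by fun_prop) 0
  rw [zero_mul, sub_zero] at ht
  refine le_of_tendsto ht ?_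
  filter_upwards [self_mem_nhdsWithin] with δ hδ using key δ hδ

/-- Extension by zero of a family indexed by `G`. -/
def ext0 {d : ℕ} (G : Finset (Euc d)) (v : G → AffP d) (x : Euc d) : AffP d :=
  open Classical in if h : x ∈ G then v ⟨x, h⟩ else 0

lemma ext0_cont {d : ℕ} (G : Finset (Euc d)) (x : Euc d) :
    Continuous (fun v : G → AffP d => ext0 G v x) := by
  unfold ext0
  by_cases h : x ∈ G
  · simp only [h, dite_true]; fun_prop
  · simp only [h, dite_false]; fun_prop

lemma ext0_smul {d : ℕ} (G : Finset (Euc d)) (r : ℝ) (v : G → AffP d) (x : Euc d) :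
    ext0 G (r • v) x = r • ext0 G v x := by
  unfold ext0
  split_ifs <;> simp

lemma Hf_continuous {d : ℕ} {D : Set (Euc d)} (hD : IsCompact D) {ν : Measure (Euc d)}
    [IsFiniteMeasure ν] (hνD : ν Dᶜ = 0) {C : Set (Euc d)}
    {G : Finset (Euc d)} (hG : G.Nonempty) :
    Continuous (fun v : G → AffP d => Hf ν C G hG (ext0 G v)) := by
  have h2 : (ν.restrict C).restrict D = ν.restrict C := Measure.restrict_eq_self_of_ae_mem (by
    refine ae_restrict_of_ae ?_
    rw [ae_iff]; exact hνD)
  unfold Hf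
  rw [← h2]
  refine continuous_parametric_integral_of_continuous ?_ hD
  refine Continuous.finset_sup'_apply hG fun i _ => ?_
  exact ev_continuous.comp (((ext0_cont G i).comp continuous_fst).prodMk continuous_snd)

lemma Hf_smul {d : ℕ} (ν : Measure (Euc d)) (C : Set (Euc d)) (G : Finset (Euc d))
    (hG : G.Nonempty) (u : Euc d → AffP d) (r : ℝ) (hr : 0 ≤ r) :
    Hf ν C G hG (fun x => r • u x) = r * Hf ν C G hG u := by
  unfold Hf
  rw [← integral_const_mul]
  congr 1; ext y
  simp only [ev_smul]
  exact (Finset.mul₀_sup' hr (fun x => ev (u x) y) G hG).symm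

lemma Lf_smul {d : ℕ} (G : Finset (Euc d)) (m : Euc d → ℝ) (u : Euc d → AffP d) (r : ℝ) :
    Lf G m (fun x => r • u x) = r * Lf G m u := by
  simp only [Lf, ev_smul, Finset.mul_sum]
  exact Finset.sum_congr rfl fun _ _ => by ring

lemma Hf_add_const {d : ℕ} {D : Set (Euc d)} (hD : IsCompact D) {ν : Measure (Euc d)}
    [IsFiniteMeasure ν] (hνD : ν Dᶜ = 0) {C : Set (Euc d)}
    {G : Finset (Euc d)} (hG : G.Nonempty) (u : Euc d → AffP d) (w : AffP d) :
    Hf ν C G hG (fun x => u x + w) = Hf ν C G hG u + ∫ y in C, ev w y ∂ν := by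
  unfold Hf
  rw [← integral_add]
  · congr 1; ext y
    simp only [ev_add]
    exact (Finset.sup'_add G (fun x => ev (u x) y) (ev w y) hG).symm
  · exact (integrable_of_cont hD ν hνD
        (convexOn_cont (convexOn_sup' G hG (fun x => ev (u x)) (fun i _ => ev_convexOn _)))).restrict
  · exact (integrable_of_cont hD ν hνD (ev_cont w)).restrict

lemma Lf_congr {d : ℕ} (G : Finset (Euc d)) (m : Euc d → ℝ) (u w : Euc d → AffP d)
    (h : ∀ x ∈ G, u x = w x) : Lf G m u = Lf G m w :=
  Finset.sum_congr rfl fun x hx => by rw [h x hx]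

lemma Hf_congr {d : ℕ} (ν : Measure (Euc d)) (C : Set (Euc d)) (G : Finset (Euc d))
    (hG : G.Nonempty) (u w : Euc d → AffP d)
    (h : ∀ x ∈ G, u x = w x) : Hf ν C G hG u = Hf ν C G hG w := by
  unfold Hf
  congr 1; ext y
  exact Finset.sup'_congr hG rfl fun x hx => by rw [h x hx]

lemma step1 {d : ℕ} {D : Set (Euc d)} (hD : IsCompact D) {ν : Measure (Euc d)}
    [IsFiniteMeasure ν] (hνD : ν Dᶜ = 0) {C : Set (Euc d)}
    {G : Finset (Euc d)} (hG : G.Nonempty) {p : Euc d → ℝ} (hp : ∀ x ∈ G, 0 < p x)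
    (hdom : Dom ν p G C) (t : Euc d → ℝ) (ht0 : ∑ x ∈ G, t x = 0) (ht1 : ∑ x ∈ G, t x • x = 0)
    {x0 : Euc d} (hx0 : x0 ∈ G)
    (hno : ∀ u : Euc d → AffP d, Lf G p u = Hf ν C G hG u → ∀ x ∈ G, u x = u x0) :
    ∃ ε : ℝ, 0 < ε ∧ (∀ x ∈ G, |ε * t x| ≤ p x) ∧ Dom ν (fun x => p x + ε * t x) G C ∧
      Dom ν (fun x => p x - ε * t x) G C := by
  have Lcont : ∀ m : Euc d → ℝ, Continuous (fun v : G → AffP d => Lf G m (ext0 G v)) := by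
    intro m
    unfold Lf
    refine continuous_finsetSum _ fun x _ => continuous_const.mul ?_
    exact ev_continuous.comp ((ext0_cont G x).prodMk continuous_const)
  have : ProperSpace (G → AffP d) := FiniteDimensional.proper ℝ _
  set K : Set (G → AffP d) := Metric.sphere 0 1 ∩ {v | ext0 G v x0 = 0} with hK
  have Kc : IsCompact K := (isCompact_sphere 0 1).inter_right
    (isClosed_eq (ext0_cont G x0) continuous_const)
  obtain ⟨c, hc, hcK⟩ := Kc.exists_forall_le'
    (f := fun v => Hf ν C G hG (ext0 G v) - Lf G p (ext0 G v)) (a := 0)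
    ((Hf_continuous hD hνD hG).sub (Lcont p)).continuousOn (by
      rintro v ⟨hv1, hv2⟩
      have h1 := Lf_le_Hf hG (fun x hx => (hp x hx).le) hdom (ext0 G v)
      refine sub_pos.2 (lt_of_le_of_ne h1 fun h => ?_)
      have h2 := hno _ h
      have h3 : v = 0 := by
        ext1 x
        have := h2 x x.2
        rw [hv2] at this
        simpa [ext0] using this
      simp [h3] at hv1)
  obtain ⟨M, hM⟩ := Kc.exists_bound_of_continuousOn (Lcont t).continuousOn
  let q := G.inf' hG (fun x => p x / (|t x| + 1))
  have hq : 0 < q := by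
    rw [Finset.lt_inf'_iff]
    intro x hx
    have := hp x hx
    positivity
  have hc2 : 0 < c / (|M| + 1) := by positivity
  set ε := min (c / (|M| + 1)) q with hε
  have hεpos : 0 < ε := lt_min hc2 hq
  have hεM : ε * |M| ≤ c := by
    have : ε ≤ c / (|M| + 1) := min_le_left _ _
    rw [le_div_iff₀ (by positivity)] at this
    nlinarith
  have main : ∀ s : ℝ, |s| ≤ ε → Dom ν (fun x => p x + s * t x) G C := by
    intro s hs
    refine Dom_of_Lf hD hνD hG fun u => ?_
    set w : G → AffP d := fun x => u x - u x0 with hw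
    have hwu : ∀ x ∈ G, ext0 G w x = u x - u x0 := by
      intro x hx; simp [ext0, hx, hw]
    have Lsplit : ∀ z : Euc d → AffP d,
        Lf G (fun x => p x + s * t x) z = Lf G p z + s * Lf G t z := by
      intro z
      simp only [Lf, add_mul, Finset.sum_add_distrib, Finset.mul_sum, mul_assoc]
    have claim : Lf G (fun x => p x + s * t x) (ext0 G w) ≤ Hf ν C G hG (ext0 G w) := by
      by_cases h0 : w = 0
      · have h1 : ∀ x ∈ G, ext0 G w x = (fun _ => (0 : AffP d)) x := by
          intro x hx; simp [ext0, h0]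
        rw [Lf_congr _ _ _ _ h1, Hf_congr _ _ _ _ _ _ h1]
        simp [Lf, Hf, ev_zero]
      · have hn : 0 < ‖w‖ := norm_pos_iff.2 h0
        set k : G → AffP d := ‖w‖⁻¹ • w with hk
        have hwk : ext0 G w = fun x => ‖w‖ • ext0 G k x := by
          ext1 x
          rw [← ext0_smul, hk, smul_smul, mul_inv_cancel₀ hn.ne', one_smul]
        have hkK : k ∈ K := by
          refine ⟨?_, ?_⟩
          · simp [hk, norm_smul, hn.ne']
          · simp [hk, ext0_smul, hwu x0 hx0]
        have h1 := hcK k hkK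
        have h2 := hM k hkK
        rw [hwk, Hf_smul _ _ _ _ _ _ hn.le, Lf_smul]
        refine mul_le_mul_of_nonneg_left ?_ hn.le
        rw [Lsplit]
        have h3 : s * Lf G t (ext0 G k) ≤ c := by
          calc s * Lf G t (ext0 G k) ≤ |s * Lf G t (ext0 G k)| := le_abs_self _
            _ = |s| * |Lf G t (ext0 G k)| := abs_mul _ _
            _ ≤ ε * |M| := by
              exact mul_le_mul hs (h2.trans (le_abs_self M)) (abs_nonneg _) hεpos.le
            _ ≤ c := hεM
        linarith
    have hu : ∀ x ∈ G, u x = (fun x => ext0 G w x + u x0) x := by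
      intro x hx; simp [hwu x hx]
    rw [Hf_congr _ _ _ _ _ _ hu, Hf_add_const hD hνD hG, Lf_congr _ _ _ _ hu]
    have e1 : Lf G (fun x => p x + s * t x) (fun x => ext0 G w x + u x0)
        = Lf G (fun x => p x + s * t x) (ext0 G w) + Lf G (fun x => p x + s * t x) fun _ => u x0 := by
      simp only [Lf, ev_add, mul_add, Finset.sum_add_distrib]
    have e2 : Lf G t (fun _ => u x0) = 0 := by
      have : Lf G t (fun _ => u x0) = (u x0).1 (∑ x ∈ G, t x • x) + (u x0).2 * ∑ x ∈ G, t x := by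
        simp only [Lf, ev, mul_add, Finset.sum_add_distrib, map_sum, map_smul, smul_eq_mul,
          Finset.mul_sum]
        congr 1
        exact Finset.sum_congr rfl fun _ _ => mul_comm _ _
      rw [this, ht0, ht1]; simp
    have e3 : Lf G p (fun _ => u x0) = ∫ y in C, ev (u x0) y ∂ν := Dom_affine hdom _
    rw [e1, Lsplit (fun _ => u x0), e2, e3]
    linarith
  refine ⟨ε, hεpos, fun x hx => ?_, main ε (abs_of_pos hεpos).le, ?_⟩
  · have h1 : ε ≤ p x / (|t x| + 1) := (min_le_right _ _).trans (Finset.inf'_le _ hx)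
    rw [le_div_iff₀ (by positivity)] at h1
    rw [abs_mul, abs_of_pos hεpos]
    nlinarith
  · have := main (-ε) (by rw [abs_neg, abs_of_pos hεpos])
    simpa [sub_eq_add_neg] using this

/-- The cell of the affine function `a` in the upper envelope of `A` over `C`, with ties broken by
a fixed well-order. -/
def cell {d : ℕ} (A : Finset (AffP d)) (C : Set (Euc d)) (a : AffP d) : Set (Euc d) :=
  {y | y ∈ C ∧ ∀ b ∈ A, ev b y ≤ ev a y ∧ (WellOrderingRel b a → ev b y < ev a y)}

lemma cell_convex {d : ℕ} (A : Finset (AffP d)) {C : Set (Euc d)} (hC : Convex ℝ C) (a : AffP d) :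
    Convex ℝ (cell A C a) := by
  rintro y ⟨hy, hy2⟩ z ⟨hz, hz2⟩ r s hr hs hrs
  refine ⟨hC hy hz hr hs hrs, fun b hb => ⟨?_, fun hba => ?_⟩⟩
  · rw [ev_combo _ _ _ _ _ hrs, ev_combo _ _ _ _ _ hrs]
    have h1 := (hy2 b hb).1
    have h2 := (hz2 b hb).1
    gcongr
  · rw [ev_combo _ _ _ _ _ hrs, ev_combo _ _ _ _ _ hrs]
    have h1 := (hy2 b hb).2 hba
    have h2 := (hz2 b hb).2 hba
    rcases hr.eq_or_lt with h | h
    · have : s = 1 := by linarith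
      subst this; subst h; linarith
    · have h3 := mul_lt_mul_of_pos_left h1 h
      have h4 := mul_le_mul_of_nonneg_left h2.le hs
      linarith

lemma cell_measurable {d : ℕ} (A : Finset (AffP d)) {C : Set (Euc d)} (hC : MeasurableSet C)
    (a : AffP d) : MeasurableSet (cell A C a) := by
  have : cell A C a = C ∩ ⋂ b ∈ A, ({y | ev b y ≤ ev a y} ∩
      {y | WellOrderingRel b a → ev b y < ev a y}) := by
    ext y; simp [cell]
  rw [this]
  refine hC.inter (Finset.measurableSet_biInter _ fun b _ => MeasurableSet.inter ?_ ?_)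
  · exact (isClosed_le (ev_cont b) (ev_cont a)).measurableSet
  · by_cases h : WellOrderingRel b a
    · simp only [h, true_imp_iff]
      exact (isOpen_lt (ev_cont b) (ev_cont a)).measurableSet
    · simp [h]

lemma cell_disjoint {d : ℕ} (A : Finset (AffP d)) (C : Set (Euc d)) {a b : AffP d} (ha : a ∈ A)
    (hb : b ∈ A) (hab : a ≠ b) : Disjoint (cell A C a) (cell A C b) := by
  rw [Set.disjoint_left]
  rintro y ⟨_, h1⟩ ⟨_, h2⟩
  rcases trichotomous_of WellOrderingRel a b with h | h | h
  · exact absurd ((h2 a ha).2 h) (not_lt.2 (h1 b hb).1)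
  · exact hab h
  · have := (h1 b hb).2 h
    have := (h2 a ha).1
    linarith

lemma cell_cover {d : ℕ} (A : Finset (AffP d)) (hA : A.Nonempty) (C : Set (Euc d)) :
    ⋃ a ∈ A, cell A C a = C := by
  ext y
  simp only [mem_iUnion, exists_prop]
  constructor
  · rintro ⟨a, _, h⟩; exact h.1
  · intro hy
    obtain ⟨a0, ha0, hmax⟩ := A.exists_max_image (fun b => ev b y) hA
    let S : Set (AffP d) := {a | a ∈ A ∧ ∀ b ∈ A, ev b y ≤ ev a y}
    have hS : S.Nonempty := ⟨a0, ha0, hmax⟩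
    have wf : WellFounded (WellOrderingRel (α := AffP d)) := IsWellFounded.wf
    refine ⟨wf.min S hS, (wf.min_mem S hS).1, hy, fun b hb => ⟨(wf.min_mem S hS).2 b hb, ?_⟩⟩
    intro hlt
    by_contra hcon
    have hbS : b ∈ S := ⟨hb, fun c hc =>
      ((wf.min_mem S hS).2 c hc).trans (not_lt.1 hcon)⟩
    exact wf.not_lt_min S hbS hlt

lemma tie_null {d : ℕ} {ν : Measure (Euc d)} (hac : ν ≪ (volume : Measure (Euc d)))
    {a b : AffP d} (hab : a ≠ b) : ν {y | ev a y = ev b y} = 0 := by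
  apply hac
  by_cases hne : ∃ y0, ev a y0 = ev b y0
  swap
  · push Not at hne
    simp [hne]
  have hlin : ∀ y, ev a y - ev b y = ev (a - b) y := fun y => (ev_sub a b y).symm
  let S : AffineSubspace ℝ (Euc d) :=
    { carrier := {y | ev a y = ev b y}
      smul_vsub_vadd_mem' := by
        intro c p1 p2 p3 h1 h2 h3
        simp only [mem_setOf_eq, ev, vsub_eq_sub, vadd_eq_add, map_add, map_smul, map_sub,
          smul_eq_mul] at *
        linear_combination c * h1 - c * h2 + h3 }
  have := Measure.addHaar_affineSubspace (volume : Measure (Euc d)) S (by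
    intro htop
    have hall : ∀ y, ev a y = ev b y := by
      intro y
      have : y ∈ S := by rw [htop]; trivial
      exact this
    apply hab
    have h0 := hall 0
    simp only [ev, map_zero, zero_add] at h0
    refine Prod.ext ?_ h0
    ext1 y
    have := hall y
    simp only [ev] at this
    linarith)
  exact this

open Classical in
lemma step2 {d : ℕ} {D : Set (Euc d)} (hD : IsCompact D) {ν : Measure (Euc d)}
    [IsFiniteMeasure ν] (hνD : ν Dᶜ = 0) (hac : ν ≪ (volume : Measure (Euc d)))
    {C : Set (Euc d)} (hCm : MeasurableSet C)
    {G : Finset (Euc d)} (hG : G.Nonempty) {p : Euc d → ℝ} (hp : ∀ x ∈ G, 0 < p x)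
    (hdom : Dom ν p G C) (u : Euc d → AffP d) (hu : Lf G p u = Hf ν C G hG u)
    (a : AffP d) (haA : a ∈ G.image u) :
    Dom ν p (G.filter (fun x => u x = a)) (cell (G.image u) C a) := by
  intro ψ hψ
  set A := G.image u with hA
  have hAne : A.Nonempty := hG.image u
  have hψc := convexOn_cont hψ
  let f : ℝ → AffP d → Euc d → ℝ := fun ε b y => ev b y + (if b = a then ε * ψ y else 0)
  let φ : ℝ → Euc d → ℝ := fun ε y => A.sup' hAne (fun b => f ε b y)
  have hφconv : ∀ ε, 0 ≤ ε → ConvexOn ℝ univ (φ ε) := by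
    intro ε hε
    refine convexOn_sup' A hAne (f ε) fun b _ => ?_
    by_cases hb : b = a
    · simp only [f, hb, if_true]
      exact (ev_convexOn a).add (hψ.smul hε)
    · simp only [f, hb, if_false, add_zero]
      exact ev_convexOn b
  have hint : ∀ ε, 0 ≤ ε → Integrable (φ ε) (ν.restrict C) := fun ε hε =>
    (integrable_of_cont hD ν hνD (convexOn_cont (hφconv ε hε))).restrict
  set S := ∑ x ∈ G.filter (fun x => u x = a), p x * ψ x with hS
  have hH : Hf ν C G hG u = ∫ y in C, φ 0 y ∂ν := by
    unfold Hf
    congr 1; ext y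
    simp only [φ, f, zero_mul, ite_self, add_zero]
    rw [Finset.sup'_image]
    rfl
  have hlow : ∀ ε, 0 < ε → S ≤ ∫ y in C, (φ ε y - φ 0 y) / ε ∂ν := by
    intro ε hε
    rw [integral_div, integral_sub (hint ε hε.le) (hint 0 le_rfl), ← hH, ← hu, le_div_iff₀ hε]
    have h1 := hdom _ (hφconv ε hε.le)
    have h2 : Lf G p u + S * ε ≤ ∑ x ∈ G, p x * φ ε x := by
      rw [hS, Finset.sum_filter, Finset.sum_mul, Lf, ← Finset.sum_add_distrib]
      refine Finset.sum_le_sum fun x hx => ?_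
      have h3 : f ε (u x) x ≤ φ ε x :=
        Finset.le_sup' (fun b => f ε b x) (Finset.mem_image_of_mem u hx)
      have h4 := mul_le_mul_of_nonneg_left h3 (hp x hx).le
      refine le_trans (le_of_eq ?_) h4
      simp only [f]
      split_ifs <;> ring
    linarith
  have hbd : ∀ ε, 0 < ε → ∀ y, |φ ε y - φ 0 y| ≤ ε * |ψ y| := by
    intro ε hε y
    have hf : ∀ b, |f ε b y - f 0 b y| ≤ ε * |ψ y| := by
      intro b
      simp only [f]
      split_ifs
      · simp [abs_mul, abs_of_pos hε]
      · simp; positivity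
    rw [abs_sub_le_iff]
    constructor
    · rw [sub_le_iff_le_add]
      refine Finset.sup'_le _ _ fun b hb => ?_
      have h1 := (abs_le.1 (hf b)).2
      have h2 : f 0 b y ≤ φ 0 y := Finset.le_sup' (fun b => f 0 b y) hb
      linarith
    · rw [sub_le_iff_le_add]
      refine Finset.sup'_le _ _ fun b hb => ?_
      have h1 := (abs_le.1 (hf b)).1
      have h2 : f ε b y ≤ φ ε y := Finset.le_sup' (fun b => f ε b y) hb
      linarith
  let e : ℕ → ℝ := fun n => 1 / ((n : ℝ) + 1)
  have he : ∀ n, 0 < e n := fun n => Nat.one_div_pos_of_nat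
  have het : Tendsto e atTop (𝓝 0) := tendsto_one_div_add_atTop_nhds_zero_nat
  have hnt : ∀ᵐ y ∂(ν.restrict C), ∀ b ∈ A, ∀ b' ∈ A, b ≠ b' → ev b y ≠ ev b' y := by
    refine ae_restrict_of_ae ?_
    rw [Filter.eventually_all_finset]
    intro b _
    rw [Filter.eventually_all_finset]
    intro b' _
    by_cases hbb : b = b'
    · simp [hbb]
    · have := tie_null hac hbb
      rw [ae_iff]
      simpa [hbb] using this
  have hlim : Tendsto (fun n => ∫ y in C, (φ (e n) y - φ 0 y) / e n ∂ν) atTop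
      (𝓝 (∫ y in C, (cell A C a).indicator ψ y ∂ν)) := by
    refine tendsto_integral_of_dominated_convergence (fun y => |ψ y|) ?_ ?_ ?_ ?_
    · intro n
      exact (((hint _ (he n).le).sub (hint 0 le_rfl)).div_const _).aestronglyMeasurable
    · exact (integrable_of_cont hD ν hνD hψc.abs).restrict
    · intro n
      refine Eventually.of_forall fun y => ?_
      rw [Real.norm_eq_abs, abs_div, abs_of_pos (he n), div_le_iff₀ (he n), mul_comm]
      exact hbd _ (he n) y
    · filter_upwards [hnt, ae_restrict_mem hCm] with y hy hyC
      obtain ⟨bs, hbs, hmax⟩ := A.exists_max_image (fun b => ev b y) hAne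
      have hev : ∀ᶠ ε in 𝓝 (0 : ℝ), ∀ b ∈ A, f ε b y ≤ f ε bs y := by
        rw [Filter.eventually_all_finset]
        intro b hb
        by_cases hbb : b = bs
        · subst hbb; exact Eventually.of_forall fun _ => le_rfl
        · have hlt : ev b y < ev bs y := lt_of_le_of_ne (hmax b hb) (hy b hb bs hbs hbb)
          have hc : ∀ b, Continuous (fun ε => f ε b y) := by
            intro b; simp only [f]
            split_ifs <;> fun_prop
          have := ((hc b).tendsto 0).eventually_lt ((hc bs).tendsto 0) (by simpa [f] using hlt)
          exact this.mono fun _ h => h.le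
      have hφe : ∀ ε, (∀ b ∈ A, f ε b y ≤ f ε bs y) → φ ε y = f ε bs y := by
        intro ε h
        refine le_antisymm (Finset.sup'_le _ _ h) (Finset.le_sup' (fun b => f ε b y) hbs)
      have h0 := hφe 0 hev.self_of_nhds
      refine tendsto_const_nhds.congr' ?_
      filter_upwards [het.eventually hev] with n hn
      rw [hφe _ hn, h0]
      by_cases hba : bs = a
      · have hm : y ∈ cell A C a := by
          refine ⟨hyC, fun b hb => ⟨hba ▸ hmax b hb, fun hr => ?_⟩⟩
          refine lt_of_le_of_ne (hba ▸ hmax b hb) (hy b hb a (hba ▸ hbs) ?_)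
          rintro rfl
          exact irrefl_of WellOrderingRel b hr
        rw [indicator_of_mem hm]
        simp [f, hba, (he n).ne']
      · have hm : y ∉ cell A C a := by
          rintro ⟨_, h⟩
          have h1 := (h bs hbs).1
          exact hy bs hbs a haA hba (le_antisymm h1 (hmax a haA))
        rw [indicator_of_notMem hm]
        simp [f, hba]
  rw [integral_indicator (cell_measurable A hCm a), Measure.restrict_restrict
    (cell_measurable A hCm a), inter_eq_self_of_subset_left (fun y hy => hy.1)] at hlim
  exact ge_of_tendsto' hlim fun n => hlow _ (he n)

lemma mem_of_dom {d : ℕ} {ν : Measure (Euc d)}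
    [IsFiniteMeasure ν] (hac : ν ≪ (volume : Measure (Euc d)))
    {C : Set (Euc d)} (hC : Convex ℝ C)
    {G : Finset (Euc d)} {p : Euc d → ℝ} (hp : ∀ x ∈ G, 0 < p x)
    (hdom : Dom ν p G C) {x : Euc d} (hx : x ∈ G) : x ∈ C := by
  by_contra hxC
  obtain ⟨f, hf⟩ := geometric_hahn_banach_open_point hC.interior isOpen_interior
    (fun h => hxC (interior_subset h))
  let g : ℕ → Euc d → ℝ := fun n y => max 0 (1 + n * (f y - f x))
  have hgconv : ∀ n, ConvexOn ℝ univ (g n) := by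
    intro n
    have h1 : ConvexOn ℝ univ (fun y : Euc d => 1 + (n : ℝ) * (f y - f x)) := by
      have := ev_convexOn (((n : ℝ) • f, 1 - n * f x) : AffP d)
      convert this using 2 with y
      simp [ev]; ring
    exact (convexOn_const 0 convex_univ).sup h1
  have hgc : ∀ n, Continuous (g n) := fun n => convexOn_cont (hgconv n)
  have hlow : ∀ n, p x ≤ ∫ y in C, g n y ∂ν := by
    intro n
    refine le_trans ?_ (hdom _ (hgconv n))
    have h1 : p x * g n x ≤ ∑ z ∈ G, p z * g n z :=
      Finset.single_le_sum (f := fun z => p z * g n z)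
        (fun z hz => mul_nonneg (hp z hz).le (le_max_left _ _)) hx
    simpa [g] using h1
  have hae : ∀ᵐ y ∂(ν.restrict C), y ∈ interior C := by
    have h1 : ν (frontier C) = 0 := hac (hC.addHaar_frontier _)
    have h2 : ∀ᵐ y ∂ν, y ∉ frontier C := by rw [ae_iff]; simpa using h1
    have hnm : NullMeasurableSet C ν :=
      (hC.nullMeasurableSet (volume : Measure (Euc d))).mono_ac hac
    filter_upwards [ae_restrict_of_ae h2, ae_restrict_mem₀ hnm] with y hy hyC
    by_contra h
    exact hy ⟨subset_closure hyC, h⟩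
  have hlim : Tendsto (fun n => ∫ y in C, g n y ∂ν) atTop (𝓝 (∫ y in C, (0 : ℝ) ∂ν)) := by
    refine tendsto_integral_of_dominated_convergence (fun _ => 1) ?_ (integrable_const _) ?_ ?_
    · exact fun n => (hgc n).aestronglyMeasurable
    · intro n
      filter_upwards [hae] with y hy
      have h1 := hf y hy
      rw [Real.norm_eq_abs, abs_of_nonneg (le_max_left _ _)]
      refine max_le zero_le_one ?_
      have : (n : ℝ) * (f y - f x) ≤ 0 :=
        mul_nonpos_of_nonneg_of_nonpos (Nat.cast_nonneg n) (by linarith)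
      linarith
    · filter_upwards [hae] with y hy
      have h1 := hf y hy
      obtain ⟨N, hN⟩ := exists_nat_gt (1 / (f x - f y))
      have hpos : 0 < f x - f y := by linarith
      rw [div_lt_iff₀ hpos] at hN
      refine tendsto_const_nhds.congr' ?_
      filter_upwards [eventually_ge_atTop N] with n hn
      have hn' : (N : ℝ) ≤ n := by exact_mod_cast hn
      have h2 : (N : ℝ) * (f x - f y) ≤ n * (f x - f y) := by gcongr
      exact (max_eq_left (by linarith)).symm
  have h3 := ge_of_tendsto' hlim hlow
  simp at h3
  linarith [hp x hx]

/-- Extremality of the weights `p` among the weights on `G` dominated by `ν|_C`. -/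
def ExtW {d : ℕ} (ν : Measure (Euc d)) (p : Euc d → ℝ) (G : Finset (Euc d)) (C : Set (Euc d)) :
    Prop :=
  ∀ t : Euc d → ℝ, (∀ x ∈ G, |t x| ≤ p x) → Dom ν (fun x => p x + t x) G C →
    Dom ν (fun x => p x - t x) G C → ∀ x ∈ G, t x = 0

open Classical in
lemma Dom_glue {d : ℕ} {D : Set (Euc d)} (hD : IsCompact D) {ν : Measure (Euc d)}
    [IsFiniteMeasure ν] (hνD : ν Dᶜ = 0) {C : Set (Euc d)} (hCm : MeasurableSet C)
    {G : Finset (Euc d)} (hG : G.Nonempty) (u : Euc d → AffP d) (m : Euc d → ℝ)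
    (h : ∀ b ∈ G.image u, Dom ν m (G.filter (fun x => u x = b)) (cell (G.image u) C b)) :
    Dom ν m G C := by
  intro ψ hψ
  have hc := convexOn_cont hψ
  have hi := integrable_of_cont hD ν hνD hc
  rw [← Finset.sum_fiberwise_of_maps_to (fun x hx => Finset.mem_image_of_mem u hx)]
  have e : ∫ y in C, ψ y ∂ν = ∑ b ∈ G.image u, ∫ y in cell (G.image u) C b, ψ y ∂ν := by
    rw [← integral_biUnion_finset _ (fun b _ => cell_measurable _ hCm b), cell_cover _ (hG.image u)]
    · intro a ha b hb hab
      exact cell_disjoint _ _ ha hb hab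
    · exact fun b _ => hi.integrableOn
  rw [e]
  exact Finset.sum_le_sum fun b hb => h b hb ψ hψ

open Classical in
lemma main_ind {d : ℕ} {D : Set (Euc d)} (hD : IsCompact D) {ν : Measure (Euc d)}
    [IsFiniteMeasure ν] (hνD : ν Dᶜ = 0) (hac : ν ≪ (volume : Measure (Euc d)))
    (p : Euc d → ℝ) (n : ℕ) : ∀ (G : Finset (Euc d)) (C : Set (Euc d)), G.card = n → Convex ℝ C →
      MeasurableSet C → (∀ x ∈ G, 0 < p x) → Dom ν p G C → ExtW ν p G C →
      ∃ P : Finset (Set (Euc d)), (∀ B ∈ P, Convex ℝ B ∧ MeasurableSet B) ∧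
        (⋃ B ∈ P, B) = C ∧ ((P : Set (Set (Euc d))).Pairwise fun B B' => Disjoint B B') ∧
        ∀ B ∈ P, Dom ν p (G.filter (· ∈ B)) B ∧
          AffineIndependent ℝ ((↑) : (G.filter (· ∈ B) : Finset (Euc d)) → Euc d) := by
  induction n using Nat.strong_induction_on with
  | _ n ih =>
  intro G C hcard hC hCm hp hdom hext
  by_cases hAI : AffineIndependent ℝ ((↑) : G → Euc d)
  · have hfil : G.filter (· ∈ C) = G :=
      Finset.filter_true_of_mem fun x hx => mem_of_dom hac hC hp hdom hx
    refine ⟨{C}, ?_, ?_, ?_, ?_⟩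
    · simpa using ⟨hC, hCm⟩
    · simp
    · simp
    · intro B hB
      rw [Finset.mem_singleton] at hB
      subst hB
      rw [hfil]
      exact ⟨hdom, hAI⟩
  obtain ⟨t, ht1, ht0, x0, hx0, htx0⟩ := exists_nontrivial_relation_sum_zero_of_not_affine_ind hAI
  have hG : G.Nonempty := ⟨x0, hx0⟩
  have hu : ∃ u : Euc d → AffP d, Lf G p u = Hf ν C G hG u ∧ ∃ x ∈ G, u x ≠ u x0 := by
    by_contra hcon
    push Not at hcon
    obtain ⟨ε, hε, h1, h2, h3⟩ := step1 hD hνD hG hp hdom t ht0 ht1 hx0 hcon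
    have h4 := hext (fun x => ε * t x) h1 h2 h3 x0 hx0
    exact htx0 ((mul_eq_zero.1 h4).resolve_left hε.ne')
  obtain ⟨u, hu, x1, hx1, hne⟩ := hu
  set A := G.image u with hA
  have hAne : A.Nonempty := hG.image u
  have hdomA : ∀ a ∈ A, Dom ν p (G.filter (fun x => u x = a)) (cell A C a) := fun a ha =>
    step2 hD hνD hac hCm hG hp hdom u hu a ha
  have hpA : ∀ a, ∀ x ∈ G.filter (fun x => u x = a), 0 < p x := fun a x hx =>
    hp x (Finset.mem_filter.1 hx).1
  have hex : ∀ a : AffP d, a ∈ A → ∃ P : Finset (Set (Euc d)),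
      (∀ B ∈ P, Convex ℝ B ∧ MeasurableSet B) ∧
        (⋃ B ∈ P, B) = cell A C a ∧ ((P : Set (Set (Euc d))).Pairwise fun B B' => Disjoint B B') ∧
        ∀ B ∈ P, Dom ν p ((G.filter (fun x => u x = a)).filter (· ∈ B)) B ∧
          AffineIndependent ℝ
            ((↑) : ((G.filter (fun x => u x = a)).filter (· ∈ B) : Finset (Euc d)) → Euc d) := by
    intro a ha
    refine ih _ ?_ (G.filter (fun x => u x = a)) (cell A C a) rfl (cell_convex A hC a)
      (cell_measurable A hCm a) (hpA a) (hdomA a ha) ?_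
    · rw [← hcard]
      refine Finset.card_lt_card (Finset.filter_ssubset.2 ?_)
      by_cases h : u x0 = a
      · exact ⟨x1, hx1, fun h' => hne (h'.trans h.symm)⟩
      · exact ⟨x0, hx0, h⟩
    · intro s hs1 hs2 hs3 x hx
      have hglue : ∀ σ : ℝ, Dom ν (fun x => p x + σ * s x) (G.filter (fun x => u x = a))
          (cell A C a) → Dom ν (fun x => p x + σ * (if u x = a then s x else 0)) G C := by
        intro σ hσ
        refine Dom_glue hD hνD hCm hG u _ fun b hb => ?_
        intro ψ hψ
        by_cases hba : b = a
        · subst hba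
          refine le_trans (le_of_eq (Finset.sum_congr rfl fun x hx => ?_)) (hσ ψ hψ)
          simp [(Finset.mem_filter.1 hx).2]
        · refine le_trans (le_of_eq (Finset.sum_congr rfl fun x hx => ?_)) (hdomA b hb ψ hψ)
          simp [(Finset.mem_filter.1 hx).2, hba]
      have h1 := hglue 1 (by simpa using hs2)
      have h2 := hglue (-1) (by simpa [sub_eq_add_neg] using hs3)
      have h3 := hext (fun x => if u x = a then s x else 0) (by
        intro z hz
        by_cases hza : u z = a
        · simpa [hza] using hs1 z (Finset.mem_filter.2 ⟨hz, hza⟩)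
        · simpa [hza] using (hp z hz).le) (by simpa using h1)
        (by simpa only [sub_eq_add_neg, neg_one_mul] using h2) x (Finset.mem_filter.1 hx).1
      simpa [(Finset.mem_filter.1 hx).2] using h3
  choose! P hP1 hP2 hP3 hP4 using hex
  have hsub : ∀ a ∈ A, ∀ B ∈ P a, B ⊆ cell A C a := by
    intro a ha B hB
    rw [← hP2 a ha]
    exact subset_biUnion_of_mem (u := fun B => B) hB
  refine ⟨A.biUnion P, ?_, ?_, ?_, ?_⟩
  · intro B hB
    obtain ⟨a, ha, hB⟩ := Finset.mem_biUnion.1 hB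
    exact hP1 a ha B hB
  · rw [Finset.set_biUnion_biUnion, ← cell_cover A hAne C]
    exact iUnion₂_congr fun a ha => hP2 a ha
  · intro B hB B' hB' hBB
    obtain ⟨a, ha, hB⟩ := Finset.mem_biUnion.1 (Finset.mem_coe.1 hB)
    obtain ⟨a', ha', hB'⟩ := Finset.mem_biUnion.1 (Finset.mem_coe.1 hB')
    by_cases haa : a = a'
    · subst haa
      exact hP3 a ha hB hB' hBB
    · exact (cell_disjoint A C ha ha' haa).mono (hsub a ha B hB) (hsub a' ha' B' hB')
  · intro B hB
    obtain ⟨a, ha, hB⟩ := Finset.mem_biUnion.1 hB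
    have hfil : G.filter (· ∈ B) = (G.filter (fun x => u x = a)).filter (· ∈ B) := by
      ext x
      simp only [Finset.mem_filter]
      constructor
      · rintro ⟨hx, hxB⟩
        refine ⟨⟨hx, ?_⟩, hxB⟩
        by_contra hne
        have hm : u x ∈ A := Finset.mem_image_of_mem u hx
        have h1 : x ∈ cell A C (u x) := mem_of_dom hac (cell_convex A hC _) (hpA (u x))
          (hdomA (u x) hm) (Finset.mem_filter.2 ⟨hx, rfl⟩)
        exact Set.disjoint_left.1 (cell_disjoint A C hm ha hne) h1 (hsub a ha B hB hxB)
      · rintro ⟨⟨hx, _⟩, hxB⟩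
        exact ⟨hx, hxB⟩
    rw [hfil]
    exact hP4 a ha B hB

/-- A finitely supported measure with weights `m`. -/
def fm {d : ℕ} (X : Finset (Euc d)) (m : Euc d → ℝ) : Measure (Euc d) :=
  ∑ x ∈ X, ENNReal.ofReal (m x) • Measure.dirac x

lemma fm_apply {d : ℕ} (X : Finset (Euc d)) (m : Euc d → ℝ) (s : Set (Euc d))
    (hs : MeasurableSet s) :
    fm X m s = ∑ x ∈ X, ENNReal.ofReal (m x) * s.indicator 1 x := by
  simp [fm, Measure.finset_sum_apply, hs]

lemma fm_singleton {d : ℕ} (X : Finset (Euc d)) (m : Euc d → ℝ) {x : Euc d} (hx : x ∈ X) :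
    fm X m {x} = ENNReal.ofReal (m x) := by
  rw [fm_apply _ _ _ (measurableSet_singleton x), Finset.sum_eq_single x]
  · simp
  · intro y _ hy; simp [hy]
  · exact fun h => absurd hx h

lemma fm_integral {d : ℕ} (X : Finset (Euc d)) (m : Euc d → ℝ) (hm : ∀ x ∈ X, 0 ≤ m x)
    (ψ : Euc d → ℝ) : ∫ y, ψ y ∂(fm X m) = ∑ x ∈ X, m x * ψ x := by
  unfold fm
  rw [integral_finset_sum_measure]
  · refine Finset.sum_congr rfl fun x hx => ?_
    rw [integral_smul_measure, integral_dirac, ENNReal.toReal_ofReal (hm x hx), smul_eq_mul]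
  · intro x _
    exact (integrable_dirac (by simp)).smul_measure ENNReal.ofReal_ne_top

lemma fm_fusion {d : ℕ} {D : Set (Euc d)} (hD : IsCompact D) {ν : Measure (Euc d)}
    [IsProbabilityMeasure ν] (hνD : ν Dᶜ = 0) (X : Finset (Euc d)) (hX : ∀ x ∈ X, x ∈ D)
    (m : Euc d → ℝ) (hm : ∀ x ∈ X, 0 ≤ m x) (hdom : Dom ν m X D) : fm X m ∈ fusions D ν := by
  have h2 : ν.restrict D = ν := Measure.restrict_eq_self_of_ae_mem (by
    rw [ae_iff]; exact hνD)
  refine ⟨⟨?_⟩, ?_, ?_⟩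
  · rw [fm_apply _ _ _ MeasurableSet.univ]
    simp only [indicator_univ, Pi.one_apply, mul_one]
    rw [← ENNReal.ofReal_sum_of_nonneg hm]
    have := Dom_affine hdom (0, 1)
    rw [h2] at this
    simp [ev] at this
    simp [this]
  · rw [fm_apply _ _ _ hD.measurableSet.compl]
    refine Finset.sum_eq_zero fun x hx => ?_
    simp [hX x hx]
  · intro ψ hψ _ _
    rw [fm_integral X m hm]
    have := hdom ψ hψ
    rwa [h2] at this

/-- Kleiner et al.: if `ρ` is an extreme point of the set of fusions `F_ν` of
an absolutely continuous probability measure `ν` on a compact convex `D ⊆ ℝ^d`, and `ρ` has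
finite support, then there is a finite partition of `D` into convex sets `B` such that on each
`B` the restriction `ρ|_B` is dominated by `ν|_B` in the convex order and has affinely
independent support. -/
theorem extreme_point_finite_support_partition
    {d : ℕ} (D : Set (Euc d)) (hD : IsCompact D) (hDconv : Convex ℝ D)
    (ν : Measure (Euc d)) [IsProbabilityMeasure ν] (hνD : ν Dᶜ = 0)
    (hac : ν ≪ (volume : Measure (Euc d)))
    (ρ : Measure (Euc d)) (hρ : ρ ∈ fusions D ν)
    (hext : ∀ w ∈ fusions D ν, ∀ z ∈ fusions D ν, ∀ a : ℝ, 0 < a → a < 1 →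
      ρ = ENNReal.ofReal a • w + ENNReal.ofReal (1 - a) • z → w = z)
    (hfin : (msupport ρ).Finite) :
    ∃ P : Finset (Set (Euc d)),
      (∀ B ∈ P, Convex ℝ B) ∧
      (⋃ B ∈ P, B) = D ∧
      ((P : Set (Set (Euc d))).Pairwise fun B B' => Disjoint B B') ∧
      ∀ B ∈ P, ConvexOrderLE (ρ.restrict B) (ν.restrict B) ∧
        AffineIndependent ℝ (fun x : msupport (ρ.restrict B) => (x : Euc d)) := by
  classical
  obtain ⟨hρp, hρD, hρo⟩ := hρ
  have hνr : ν.restrict D = ν := Measure.restrict_eq_self_of_ae_mem (by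
    rw [ae_iff]; exact hνD)
  have hms : msupport ρ = ρ.support := by
    ext x
    rw [Measure.mem_support_iff_forall]
    simp only [msupport, mem_setOf_eq, pos_iff_ne_zero]
  set X : Finset (Euc d) := hfin.toFinset with hXdef
  have hXc : (X : Set (Euc d)) = msupport ρ := hfin.coe_toFinset
  have hXnull : ρ (X : Set (Euc d))ᶜ = 0 := by
    rw [hXc, hms]; exact Measure.measure_compl_support
  have hsingle : ∀ s : Set (Euc d), ρ s = ρ (X.filter (· ∈ s) : Finset (Euc d)) := by
    intro s
    apply le_antisymm
    · have : s ⊆ ((X.filter (· ∈ s) : Finset (Euc d)) : Set (Euc d)) ∪ (X : Set (Euc d))ᶜ := by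
        intro y hy
        by_cases h : y ∈ X
        · left; simp [h, hy]
        · right; simpa using h
      refine (measure_mono this).trans ((measure_union_le _ _).trans ?_)
      rw [hXnull, add_zero]
    · refine measure_mono fun y hy => ?_
      exact (Finset.mem_filter.1 (Finset.mem_coe.1 hy)).2
  let p : Euc d → ℝ := fun x => (ρ {x}).toReal
  have hp : ∀ x ∈ X, 0 < p x := by
    intro x hx
    refine ENNReal.toReal_pos ?_ (measure_ne_top _ _)
    have hxs : x ∈ msupport ρ := by rw [← hXc]; exact hx
    have hopen : IsOpen ((X.erase x : Finset (Euc d)) : Set (Euc d))ᶜ :=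
      (Finset.finite_toSet _).isClosed.isOpen_compl
    have h1 := hxs _ (hopen.mem_nhds (by simp))
    rw [hsingle] at h1
    convert h1
    ext y
    simp only [mem_singleton_iff, Finset.coe_filter, mem_setOf_eq, mem_compl_iff, Finset.mem_coe,
      Finset.mem_erase, not_and]
    constructor
    · rintro rfl; exact ⟨hx, fun h => absurd rfl h⟩
    · rintro ⟨h1, h2⟩
      by_contra h
      exact h2 h h1
  have hXD : ∀ x ∈ X, x ∈ D := by
    intro x hx
    by_contra h
    have h1 : ρ {x} = 0 := measure_mono_null (by simpa using h) hρD
    have := hp x hx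
    simp [p, h1] at this
  have hρfm : ∀ B : Set (Euc d), ρ B = ∑ x ∈ X.filter (· ∈ B), ENNReal.ofReal (p x) := by
    intro B
    rw [hsingle B, ← sum_measure_singleton]
    exact Finset.sum_congr rfl fun x _ => (ENNReal.ofReal_toReal (measure_ne_top _ _)).symm
  have hρeq : ρ = fm X p := by
    ext s hs
    rw [hρfm, fm_apply _ _ _ hs, Finset.sum_filter]
    refine Finset.sum_congr rfl fun x _ => ?_
    by_cases h : x ∈ s <;> simp [h]
  have hρB : ∀ B : Set (Euc d), MeasurableSet B → ρ.restrict B = fm (X.filter (· ∈ B)) p := by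
    intro B hB
    ext s hs
    rw [Measure.restrict_apply hs, hρfm, fm_apply _ _ _ hs, Finset.sum_filter, Finset.sum_filter]
    refine Finset.sum_congr rfl fun x _ => ?_
    by_cases h : x ∈ s <;> by_cases h' : x ∈ B <;> simp [h, h']
  have hdom : Dom ν p X D := by
    intro ψ hψ
    have hc := convexOn_cont hψ
    have := hρo ψ hψ (integrable_of_cont hD ν hνD hc) (integrable_of_cont hD ρ hρD hc)
    rw [hρeq, fm_integral X p (fun x hx => (hp x hx).le)] at this
    rwa [hνr]
  have hextw : ExtW ν p X D := by
    intro t ht h1 h2 x hx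
    have hn1 : ∀ x ∈ X, 0 ≤ p x + t x := fun x hx => by
      have := (abs_le.1 (ht x hx)).1; linarith
    have hn2 : ∀ x ∈ X, 0 ≤ p x - t x := fun x hx => by
      have := (abs_le.1 (ht x hx)).2; linarith
    have h3 := hext _ (fm_fusion hD hνD X hXD _ hn1 h1) _ (fm_fusion hD hνD X hXD _ hn2 h2)
      (1 / 2) (by norm_num) (by norm_num) (by
        conv_lhs => rw [hρeq]
        simp only [fm, Finset.smul_sum, ← Finset.sum_add_distrib, smul_smul, ← add_smul]
        refine Finset.sum_congr rfl fun y hy => ?_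
        congr 1
        rw [← ENNReal.ofReal_mul (by norm_num), ← ENNReal.ofReal_mul (by norm_num),
          ← ENNReal.ofReal_add]
        · congr 1; ring
        · have := hn1 y hy; positivity
        · have := hn2 y hy
          have : (0 : ℝ) ≤ 1 - 1 / 2 := by norm_num
          positivity)
    have h4 : fm X (fun x => p x + t x) {x} = fm X (fun x => p x - t x) {x} := by rw [h3]
    rw [fm_singleton X _ hx, fm_singleton X _ hx,
      ENNReal.ofReal_eq_ofReal_iff (hn1 x hx) (hn2 x hx)] at h4
    linarith
  obtain ⟨P, hP1, hP2, hP3, hP4⟩ := main_ind hD hνD hac p X.card X D rfl hDconv hD.measurableSet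
    hp hdom hextw
  refine ⟨P, fun B hB => (hP1 B hB).1, hP2, hP3, fun B hB => ⟨?_, ?_⟩⟩
  · intro ψ hψ _ _
    rw [hρB B (hP1 B hB).2, fm_integral _ _ (fun x hx => (hp x (Finset.mem_filter.1 hx).1).le)]
    exact (hP4 B hB).1 ψ hψ
  · have hsub : msupport (ρ.restrict B) ⊆ ((X.filter (· ∈ B) : Finset (Euc d)) : Set (Euc d)) := by
      intro x hx
      by_contra hxn
      have hopen : IsOpen ((X.filter (· ∈ B) : Finset (Euc d)) : Set (Euc d))ᶜ :=
        (Finset.finite_toSet _).isClosed.isOpen_compl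
      refine hx _ (hopen.mem_nhds hxn) ?_
      rw [hρB B (hP1 B hB).2, fm_apply _ _ _ hopen.measurableSet]
      refine Finset.sum_eq_zero fun y hy => ?_
      rw [indicator_of_notMem (by simpa using hy), mul_zero]
    exact AffineIndependent.mono (t := ((X.filter (· ∈ B) : Finset (Euc d)) : Set (Euc d)))
      (hP4 B hB).2 hsub
end
end

section
/- Let D ⊂ ℝ^d be compact and convex, ν a probability measure on D absolutely continuous with respect to Lebesgue measure with bounded density, Φ ∈ C(D), and η > 0. Then for every given number of sites l ∈ ℕ there exists n ≤ l such that the penalized functional F_n^η(X,g) = F_n(X,g) − η R_n(X,g) admits a maximizer (X*,g*) over n-tuples of pairwise distinct sites and weight vectors, with m_i[X*,g*] > 0 for all i = 1,…,n, and F_n^η(X*,g*) ≥ sup_{(X,g)} F_l^η(X,g). -/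
open MeasureTheory Set Filter Topology
open scoped ENNReal NNReal

noncomputable section

/-- ν-mass of the `i`-th Laguerre cell. -/
def cellMass {d n : ℕ} (D : Set (Euc d)) (ν : Measure (Euc d)) (X : Fin n → Euc d)
    (g : Fin n → ℝ) (i : Fin n) : ℝ :=
  (ν (LaguerreCell D X g i)).toReal

/-- ν-barycenter of the `i`-th Laguerre cell. -/
def cellBary {d n : ℕ} (D : Set (Euc d)) (ν : Measure (Euc d)) (X : Fin n → Euc d)
    (g : Fin n → ℝ) (i : Fin n) : Euc d :=
  (cellMass D ν X g i)⁻¹ • ∫ y in LaguerreCell D X g i, y ∂ν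

/-- The objective `F_n[X,g] = Σ_{i : m_i > 0} m_i[X,g] Φ(b_i[X,g])`. -/
def Fn {d n : ℕ} (D : Set (Euc d)) (ν : Measure (Euc d)) (Φ : Euc d → ℝ)
    (X : Fin n → Euc d) (g : Fin n → ℝ) : ℝ :=
  ∑ i, if 0 < cellMass D ν X g i then cellMass D ν X g i * Φ (cellBary D ν X g i) else 0

/-- The penalty term `R_n[X,g]`. -/
def Rn {d n : ℕ} (D : Set (Euc d)) (ν : Measure (Euc d))
    (X : Fin n → Euc d) (g : Fin n → ℝ) : ℝ :=
  (∑ i, if 0 < cellMass D ν X g i then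
      ∫ y in LaguerreCell D X g i, ‖y - X i‖ ^ 2 ∂ν else 0)
  + ∑ i, ∑ j, if i ≠ j ∧ 0 < cellMass D ν X g i ∧ 0 < cellMass D ν X g j then
      cellMass D ν X g i * cellMass D ν X g j / ‖X i - X j‖ ^ 2 else 0

/-- The penalized objective `F_n^η = F_n - η R_n`. -/
def Fη {d n : ℕ} (D : Set (Euc d)) (ν : Measure (Euc d)) (Φ : Euc d → ℝ) (η : ℝ)
    (X : Fin n → Euc d) (g : Fin n → ℝ) : ℝ :=
  Fn D ν Φ X g - η * Rn D ν X g

section Helpers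

variable {d : ℕ}

lemma cell_isClosed {n : ℕ} {D : Set (Euc d)} (hD : IsCompact D) (X : Fin n → Euc d)
    (g : Fin n → ℝ) (i : Fin n) : IsClosed (LaguerreCell D X g i) := by
  have : LaguerreCell D X g i = D ∩ ⋂ j, {y | ‖y - X i‖ ^ 2 - g i ≤ ‖y - X j‖ ^ 2 - g j} := by
    ext y; simp [LaguerreCell]
  rw [this]
  refine hD.isClosed.inter (isClosed_iInter fun j => isClosed_le ?_ ?_) <;> fun_prop

lemma cell_meas {n : ℕ} {D : Set (Euc d)} (hD : IsCompact D) (X : Fin n → Euc d)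
    (g : Fin n → ℝ) (i : Fin n) : MeasurableSet (LaguerreCell D X g i) :=
  (cell_isClosed hD X g i).measurableSet

lemma cell_sub {n : ℕ} {D : Set (Euc d)} (X : Fin n → Euc d)
    (g : Fin n → ℝ) (i : Fin n) : LaguerreCell D X g i ⊆ D := fun _ hy => hy.1

lemma cell_compact {n : ℕ} {D : Set (Euc d)} (hD : IsCompact D) (X : Fin n → Euc d)
    (g : Fin n → ℝ) (i : Fin n) : IsCompact (LaguerreCell D X g i) :=
  hD.of_isClosed_subset (cell_isClosed hD X g i) (cell_sub X g i)

lemma cell_shift {n : ℕ} (D : Set (Euc d)) (X : Fin n → Euc d)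
    (g : Fin n → ℝ) (c : ℝ) (i : Fin n) :
    LaguerreCell D X (fun j => g j - c) i = LaguerreCell D X g i := by
  ext y
  simp only [LaguerreCell, mem_ofPred_eq]
  refine and_congr_right fun _ => forall_congr' fun j => ?_
  constructor <;> intro h <;> linarith

lemma exists_cell {n : ℕ} (hn : 0 < n) {D : Set (Euc d)} (X : Fin n → Euc d)
    (g : Fin n → ℝ) {y : Euc d} (hy : y ∈ D) : ∃ i, y ∈ LaguerreCell D X g i := by
  have : Nonempty (Fin n) := ⟨⟨0, hn⟩⟩
  obtain ⟨i, hi⟩ := Finite.exists_min (fun j => ‖y - X j‖ ^ 2 - g j)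
  exact ⟨i, hy, hi⟩

lemma cell_mass_nonneg {n : ℕ} (D : Set (Euc d)) (ν : Measure (Euc d)) (X : Fin n → Euc d)
    (g : Fin n → ℝ) (i : Fin n) : 0 ≤ cellMass D ν X g i := ENNReal.toReal_nonneg

lemma cell_mass_le_one {n : ℕ} (D : Set (Euc d)) (ν : Measure (Euc d)) [IsProbabilityMeasure ν]
    (X : Fin n → Euc d)
    (g : Fin n → ℝ) (i : Fin n) : cellMass D ν X g i ≤ 1 := measureReal_le_one

lemma cell_mass_eq_integral {n : ℕ} (D : Set (Euc d)) (ν : Measure (Euc d))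
    (X : Fin n → Euc d) (g : Fin n → ℝ) (i : Fin n) :
    cellMass D ν X g i = ∫ _ in LaguerreCell D X g i, (1 : ℝ) ∂ν := by
  simp [cellMass, Measure.real]

lemma one_le_sum_mass {n : ℕ} (hn : 0 < n) {D : Set (Euc d)} (hD : IsCompact D)
    (ν : Measure (Euc d)) [IsProbabilityMeasure ν] (hνD : ν Dᶜ = 0)
    (X : Fin n → Euc d) (g : Fin n → ℝ) : 1 ≤ ∑ i, cellMass D ν X g i := by
  have h1 : ν (⋃ i, LaguerreCell D X g i) = 1 := by
    rw [← prob_compl_eq_zero_iff (MeasurableSet.iUnion fun i => cell_meas hD X g i)]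
    refine measure_mono_null (compl_subset_compl.2 fun y hy => ?_) hνD
    exact mem_iUnion.2 (exists_cell hn X g hy)
  have h2 : ν.real (⋃ i, LaguerreCell D X g i) ≤ ∑ i, ν.real (LaguerreCell D X g i) :=
    measureReal_iUnion_fintype_le _
  simpa [Measure.real, h1, cellMass] using h2

lemma Fn_eq {n : ℕ} (D : Set (Euc d)) (ν : Measure (Euc d)) (Φ : Euc d → ℝ)
    (X : Fin n → Euc d) (g : Fin n → ℝ) :
    Fn D ν Φ X g = ∑ i, cellMass D ν X g i * Φ (cellBary D ν X g i) := by
  unfold Fn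
  refine Finset.sum_congr rfl fun i _ => ?_
  split_ifs with h
  · rfl
  · have : cellMass D ν X g i = 0 := le_antisymm (not_lt.1 h) (cell_mass_nonneg D ν X g i)
    simp [this]

lemma Rn_eq {n : ℕ} (D : Set (Euc d)) (ν : Measure (Euc d)) [IsProbabilityMeasure ν]
    (X : Fin n → Euc d) (g : Fin n → ℝ) :
    Rn D ν X g = (∑ i, ∫ y in LaguerreCell D X g i, ‖y - X i‖ ^ 2 ∂ν) +
      ∑ i, ∑ j, cellMass D ν X g i * cellMass D ν X g j / ‖X i - X j‖ ^ 2 := by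
  unfold Rn
  have key : ∀ i, ¬ 0 < cellMass D ν X g i → cellMass D ν X g i = 0 := fun i h =>
    le_antisymm (not_lt.1 h) (cell_mass_nonneg D ν X g i)
  congr 1
  · refine Finset.sum_congr rfl fun i _ => ?_
    split_ifs with h
    · rfl
    · have h0 := key i h
      have : ν (LaguerreCell D X g i) = 0 := by
        unfold cellMass at h0
        exact (ENNReal.toReal_eq_zero_iff _).1 h0 |>.resolve_right (measure_ne_top _ _)
      rw [Measure.restrict_eq_zero.2 this]; simp
  · refine Finset.sum_congr rfl fun i _ => Finset.sum_congr rfl fun j _ => ?_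
    split_ifs with h
    · rfl
    · by_cases hij : i = j
      · subst hij; simp
      · by_cases hi : 0 < cellMass D ν X g i
        · by_cases hj : 0 < cellMass D ν X g j
          · exact absurd ⟨hij, hi, hj⟩ h
          · simp [key j hj]
        · simp [key i hi]

lemma hyperplane_null (ν : Measure (Euc d)) (hac : ν ≪ (volume : Measure (Euc d)))
    {a b : Euc d} (hab : a ≠ b) (s t : ℝ) :
    ν {y | ‖y - a‖ ^ 2 - s = ‖y - b‖ ^ 2 - t} = 0 := by
  apply hac
  rcases Set.eq_empty_or_nonempty {y : Euc d | ‖y - a‖ ^ 2 - s = ‖y - b‖ ^ 2 - t} with h | ⟨y0, h0⟩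
  · rw [h]; simp
  have hsub : {y : Euc d | ‖y - a‖ ^ 2 - s = ‖y - b‖ ^ 2 - t} ⊆
      (AffineSubspace.mk' y0 (ℝ ∙ (b - a))ᗮ : AffineSubspace ℝ (Euc d)) := by
    intro y hy
    simp only [mem_ofPred_eq] at hy h0
    rw [SetLike.mem_coe, AffineSubspace.mem_mk', vsub_eq_sub, Submodule.mem_orthogonal_singleton_iff_inner_right]
    rw [@norm_sub_sq_real, @norm_sub_sq_real] at hy h0
    rw [inner_sub_left, inner_sub_right, inner_sub_right]
    rw [real_inner_comm b y, real_inner_comm a y] at hy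
    rw [real_inner_comm b y0, real_inner_comm a y0] at h0
    linarith
  refine measure_mono_null hsub (Measure.addHaar_affineSubspace _ _ ?_)
  intro htop
  have hd := congrArg AffineSubspace.direction htop
  rw [AffineSubspace.direction_mk', AffineSubspace.direction_top] at hd
  have : (b - a) ∈ (ℝ ∙ (b - a))ᗮ := by rw [hd]; trivial
  rw [Submodule.mem_orthogonal_singleton_iff_inner_right, inner_self_eq_zero] at this
  exact hab (sub_eq_zero.1 this).symm

/-- Continuity of cell integrals at configurations with distinct sites. -/
lemma cont_cell {n : ℕ} {D : Set (Euc d)} (hD : IsCompact D) (ν : Measure (Euc d))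
    [IsProbabilityMeasure ν] (hac : ν ≪ (volume : Measure (Euc d)))
    {E : Type*} [NormedAddCommGroup E] [NormedSpace ℝ E] [SecondCountableTopology E]
    (f : Euc d → Euc d → E) (hf : Continuous (Function.uncurry f))
    (Y : Fin n → Euc d) (h : Fin n → ℝ) (hY : Function.Injective Y) (j : Fin n) :
    Tendsto (fun p : (Fin n → Euc d) × (Fin n → ℝ) =>
      ∫ y in LaguerreCell D p.1 p.2 j, f (p.1 j) y ∂ν) (𝓝 (Y, h))
      (𝓝 (∫ y in LaguerreCell D Y h j, f (Y j) y ∂ν)) := by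
  have hfx : ∀ x, Continuous (f x) := fun x => hf.comp (by fun_prop : Continuous fun y => (x, y))
  obtain ⟨K, hK⟩ := ((isCompact_closedBall (Y j) 1).prod hD).exists_bound_of_continuousOn
    hf.continuousOn
  have hball : ∀ᶠ p : (Fin n → Euc d) × (Fin n → ℝ) in 𝓝 (Y, h),
      p.1 j ∈ Metric.closedBall (Y j) 1 := by
    have : Tendsto (fun p : (Fin n → Euc d) × (Fin n → ℝ) => p.1 j) (𝓝 (Y, h)) (𝓝 (Y j)) :=
      (by fun_prop : Continuous fun p : (Fin n → Euc d) × (Fin n → ℝ) => p.1 j).tendsto (Y, h)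
    exact this (Metric.closedBall_mem_nhds _ one_pos)
  simp_rw [← integral_indicator (cell_meas hD _ _ _)]
  refine tendsto_integral_filter_of_dominated_convergence (fun _ => max K 0) ?_ ?_
    (integrable_const _) ?_
  · exact Eventually.of_forall fun p =>
      (hfx _).aestronglyMeasurable.indicator (cell_meas hD _ _ _)
  · filter_upwards [hball] with p hp
    refine Eventually.of_forall fun y => ?_
    by_cases hy : y ∈ LaguerreCell D p.1 p.2 j
    · rw [indicator_of_mem hy]
      exact (hK (p.1 j, y) ⟨hp, hy.1⟩).trans (le_max_left _ _)
    · rw [indicator_of_notMem hy]; simp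
  · have hnull : ∀ᵐ y ∂ν, ∀ j', j' ≠ j →
        ‖y - Y j‖ ^ 2 - h j ≠ ‖y - Y j'‖ ^ 2 - h j' := by
      rw [ae_all_iff]; intro j'
      by_cases hj : j' = j
      · simp [hj]
      · have := hyperplane_null ν hac (hY.ne (Ne.symm hj)) (h j) (h j')
        filter_upwards [compl_mem_ae_iff.2 this] with y hy _ using hy
    filter_upwards [hnull] with y hy
    have hcont : ∀ i, Tendsto (fun p : (Fin n → Euc d) × (Fin n → ℝ) => ‖y - p.1 i‖ ^ 2 - p.2 i)
        (𝓝 (Y, h)) (𝓝 (‖y - Y i‖ ^ 2 - h i)) := fun i =>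
      (by fun_prop : Continuous fun p : (Fin n → Euc d) × (Fin n → ℝ) =>
        ‖y - p.1 i‖ ^ 2 - p.2 i).tendsto (Y, h)
    have hfc : Tendsto (fun p : (Fin n → Euc d) × (Fin n → ℝ) => f (p.1 j) y) (𝓝 (Y, h))
        (𝓝 (f (Y j) y)) :=
      (hf.comp (by fun_prop : Continuous fun p : (Fin n → Euc d) × (Fin n → ℝ) =>
        (p.1 j, y))).tendsto (Y, h)
    by_cases hyL : y ∈ LaguerreCell D Y h j
    · rw [indicator_of_mem hyL]
      refine hfc.congr' ?_
      have : ∀ᶠ p : (Fin n → Euc d) × (Fin n → ℝ) in 𝓝 (Y, h), ∀ j',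
          ‖y - p.1 j‖ ^ 2 - p.2 j ≤ ‖y - p.1 j'‖ ^ 2 - p.2 j' := by
        rw [eventually_all]; intro j'
        by_cases hj : j' = j
        · simp [hj]
        · have hlt := lt_of_le_of_ne (hyL.2 j') (hy j' hj)
          filter_upwards [(hcont j).eventually_lt (hcont j') hlt] with p hp using hp.le
      filter_upwards [this] with p hp
      rw [indicator_of_mem]
      exact ⟨hyL.1, hp⟩
    · rw [indicator_of_notMem hyL]
      refine (tendsto_const_nhds (x := (0 : E))).congr' ?_
      by_cases hyD : y ∈ D
      · have : ∃ j', ‖y - Y j'‖ ^ 2 - h j' < ‖y - Y j‖ ^ 2 - h j := by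
          by_contra hcon
          push Not at hcon
          exact hyL ⟨hyD, hcon⟩
        obtain ⟨j', hj'⟩ := this
        filter_upwards [(hcont j').eventually_lt (hcont j) hj'] with p hp
        rw [indicator_of_notMem]
        intro hc
        exact absurd (hc.2 j') (not_le.2 hp)
      · refine Eventually.of_forall fun p => ?_
        dsimp only
        rw [indicator_of_notMem]
        intro hc
        exact hyD hc.1

/-- Passing to the limit while discarding cells with vanishing mass. -/
lemma limit_cell {k n : ℕ} (hk : 0 < k) {D : Set (Euc d)} (hD : IsCompact D)
    (ν : Measure (Euc d))
    [IsProbabilityMeasure ν] (hac : ν ≪ (volume : Measure (Euc d)))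
    {E : Type*} [NormedAddCommGroup E] [NormedSpace ℝ E] [SecondCountableTopology E]
    (f : Euc d → Euc d → E) (hf : Continuous (Function.uncurry f))
    {T : Type*} (𝓕 : Filter T) (X : T → Fin k → Euc d) (g : T → Fin k → ℝ) (c : T → ℝ)
    (e : Fin n → Fin k)
    (Y : Fin n → Euc d) (h : Fin n → ℝ) (hY : Function.Injective Y)
    (hX : ∀ j, Tendsto (fun t => X t (e j)) 𝓕 (𝓝 (Y j)))
    (hg : ∀ j, Tendsto (fun t => g t (e j) - c t) 𝓕 (𝓝 (h j)))
    (hm : ∀ i, i ∉ range e → Tendsto (fun t => cellMass D ν (X t) (g t) i) 𝓕 (𝓝 0))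
    (j : Fin n) :
    Tendsto (fun t => ∫ y in LaguerreCell D (X t) (g t) (e j), f (X t (e j)) y ∂ν) 𝓕
      (𝓝 (∫ y in LaguerreCell D Y h j, f (Y j) y ∂ν)) := by
  classical
  have hfx : ∀ x, Continuous (f x) := fun x => hf.comp (by fun_prop : Continuous fun y => (x, y))
  obtain ⟨K, hK⟩ := ((isCompact_closedBall (Y j) 1).prod hD).exists_bound_of_continuousOn
    hf.continuousOn
  set B : T → Set (Euc d) := fun t =>
    LaguerreCell D (fun j => X t (e j)) (fun j => g t (e j) - c t) j with hB
  set A : T → Set (Euc d) := fun t => LaguerreCell D (X t) (g t) (e j) with hA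
  have h1 : Tendsto (fun t => ∫ y in B t, f (X t (e j)) y ∂ν) 𝓕
      (𝓝 (∫ y in LaguerreCell D Y h j, f (Y j) y ∂ν)) := by
    have := cont_cell hD ν hac f hf Y h hY j
    have h2 : Tendsto (fun t => ((fun j => X t (e j)), (fun j => g t (e j) - c t))) 𝓕
        (𝓝 (Y, h)) :=
      (tendsto_pi_nhds.2 hX).prodMk_nhds (tendsto_pi_nhds.2 hg)
    have h5 := this.comp h2
    simp only [Function.comp_def] at h5
    exact h5
  have hAB : ∀ t, A t ⊆ B t := fun t y hy =>
    ⟨hy.1, fun j' => by have := hy.2 (e j'); dsimp only; linarith⟩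
  have hdiff : ∀ t, B t \ A t ⊆ ⋃ i : {i // i ∉ range e}, LaguerreCell D (X t) (g t) i := by
    rintro t y ⟨hyB, hyA⟩
    obtain ⟨i, hi⟩ := exists_cell hk (X t) (g t) hyB.1
    refine mem_iUnion.2 ⟨⟨i, ?_⟩, hi⟩
    rintro ⟨j', rfl⟩
    apply hyA
    refine ⟨hyB.1, fun i' => ?_⟩
    have := hyB.2 j'
    have := hi.2 i'
    dsimp only at *
    linarith
  have hmass : Tendsto (fun t => ∑ i : {i // i ∉ range e}, cellMass D ν (X t) (g t) i) 𝓕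
      (𝓝 0) := by
    have := tendsto_finsetSum (Finset.univ : Finset {i // i ∉ range e})
      (fun i _ => hm i.1 i.2)
    simpa using this
  have hball : ∀ᶠ t in 𝓕, X t (e j) ∈ Metric.closedBall (Y j) 1 :=
    hX j (Metric.closedBall_mem_nhds _ one_pos)
  have h3 : Tendsto (fun t => (∫ y in B t, f (X t (e j)) y ∂ν) -
      ∫ y in A t, f (X t (e j)) y ∂ν) 𝓕 (𝓝 0) := by
    have hz : Tendsto (fun t => max K 0 * ∑ i : {i // i ∉ range e}, cellMass D ν (X t) (g t) i) 𝓕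
      (𝓝 0) := by simpa using hmass.const_mul (max K 0)
    refine squeeze_zero_norm' ?_ hz
    filter_upwards [hball] with t ht
    have hint : IntegrableOn (f (X t (e j))) (B t) ν :=
      (hfx _).continuousOn.integrableOn_compact (cell_compact hD _ _ _)
    rw [← setIntegral_sdiff (cell_meas hD _ _ _) hint (hAB t)]
    have h4 : ν.real (B t \ A t) ≤ ∑ i : {i // i ∉ range e}, cellMass D ν (X t) (g t) i :=
      (measureReal_mono (hdiff t)).trans (measureReal_iUnion_fintype_le _)
    calc _ ≤ max K 0 * ν.real (B t \ A t) := by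
          refine norm_setIntegral_le_of_norm_le_const (measure_lt_top _ _) ?_
          intro y hy
          exact (hK (X t (e j), y) ⟨ht, hy.1.1⟩).trans (le_max_left _ _)
      _ ≤ _ := mul_le_mul_of_nonneg_left h4 (le_max_right _ _)
  have := h1.sub h3
  simpa using this

lemma bary_mem {n : ℕ} {D : Set (Euc d)} (hD : IsCompact D) (hDconv : Convex ℝ D)
    (ν : Measure (Euc d)) [IsProbabilityMeasure ν] (X : Fin n → Euc d)
    (g : Fin n → ℝ) (i : Fin n) (hm : 0 < cellMass D ν X g i) : cellBary D ν X g i ∈ D := by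
  have h0 : ν (LaguerreCell D X g i) ≠ 0 := by
    intro h; simp [cellMass, h] at hm
  have := hDconv.set_average_mem hD.isClosed h0 (measure_ne_top _ _)
    (f := id) (μ := ν) ?_ ?_
  · rw [setAverage_eq] at this
    exact this
  · exact (ae_restrict_iff' (cell_meas hD _ _ _)).2 (Eventually.of_forall fun y hy => hy.1)
  · exact continuous_id.continuousOn.integrableOn_compact (cell_compact hD _ _ _)

end Helpers

section Main

variable {d : ℕ}

lemma pen_nonneg {n : ℕ} (D : Set (Euc d)) (ν : Measure (Euc d)) (X : Fin n → Euc d)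
    (g : Fin n → ℝ) (i j : Fin n) :
    0 ≤ cellMass D ν X g i * cellMass D ν X g j / ‖X i - X j‖ ^ 2 :=
  div_nonneg (mul_nonneg (cell_mass_nonneg _ _ _ _ _) (cell_mass_nonneg _ _ _ _ _)) (sq_nonneg _)

lemma mom_nonneg {n : ℕ} (D : Set (Euc d)) (ν : Measure (Euc d)) (X : Fin n → Euc d)
    (g : Fin n → ℝ) (i : Fin n) :
    0 ≤ ∫ y in LaguerreCell D X g i, ‖y - X i‖ ^ 2 ∂ν :=
  integral_nonneg fun _ => sq_nonneg _

lemma mom_le_Rn {n : ℕ} (D : Set (Euc d)) (ν : Measure (Euc d)) [IsProbabilityMeasure ν]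
    (X : Fin n → Euc d) (g : Fin n → ℝ) (i : Fin n) :
    ∫ y in LaguerreCell D X g i, ‖y - X i‖ ^ 2 ∂ν ≤ Rn D ν X g := by
  rw [Rn_eq]
  have h1 := Finset.single_le_sum (f := fun i => ∫ y in LaguerreCell D X g i, ‖y - X i‖ ^ 2 ∂ν)
    (fun i _ => mom_nonneg D ν X g i) (Finset.mem_univ i)
  have h2 : 0 ≤ ∑ i, ∑ j, cellMass D ν X g i * cellMass D ν X g j / ‖X i - X j‖ ^ 2 :=
    Finset.sum_nonneg fun i _ => Finset.sum_nonneg fun j _ => pen_nonneg D ν X g i j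
  linarith

lemma pen_le_Rn {n : ℕ} (D : Set (Euc d)) (ν : Measure (Euc d)) [IsProbabilityMeasure ν]
    (X : Fin n → Euc d) (g : Fin n → ℝ) (i j : Fin n) :
    cellMass D ν X g i * cellMass D ν X g j / ‖X i - X j‖ ^ 2 ≤ Rn D ν X g := by
  rw [Rn_eq]
  have h1 := Finset.single_le_sum
    (f := fun j => cellMass D ν X g i * cellMass D ν X g j / ‖X i - X j‖ ^ 2)
    (fun j _ => pen_nonneg D ν X g i j) (Finset.mem_univ j)
  have h2 := Finset.single_le_sum
    (f := fun i => ∑ j, cellMass D ν X g i * cellMass D ν X g j / ‖X i - X j‖ ^ 2)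
    (fun i _ => Finset.sum_nonneg fun j _ => pen_nonneg D ν X g i j) (Finset.mem_univ i)
  have h3 : 0 ≤ ∑ i, ∫ y in LaguerreCell D X g i, ‖y - X i‖ ^ 2 ∂ν :=
    Finset.sum_nonneg fun i _ => mom_nonneg D ν X g i
  linarith

lemma term_bound {n : ℕ} {D : Set (Euc d)} (hD : IsCompact D) (hDconv : Convex ℝ D)
    (ν : Measure (Euc d)) [IsProbabilityMeasure ν] (Φ : Euc d → ℝ) {M : ℝ}
    (hM : ∀ y ∈ D, ‖Φ y‖ ≤ M) (X : Fin n → Euc d) (g : Fin n → ℝ) (i : Fin n) :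
    cellMass D ν X g i * Φ (cellBary D ν X g i) ≤ M * cellMass D ν X g i := by
  rcases (cell_mass_nonneg D ν X g i).eq_or_lt with h | h
  · simp [← h]
  · rw [mul_comm]
    exact mul_le_mul_of_nonneg_right ((le_abs_self _).trans
      (hM _ (bary_mem hD hDconv ν X g i h))) h.le

/-- A bounded family has a limit along an ultrafilter. -/
lemma ultra_lim {T : Type*} (U : Ultrafilter T) {E : Type*} [NormedAddCommGroup E]
    [ProperSpace E] (f : T → E) (r : ℝ) (h : ∀ᶠ t in (U : Filter T), ‖f t‖ ≤ r) :
    ∃ a, Tendsto f U (𝓝 a) := by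
  obtain ⟨a, -, ha⟩ := (isCompact_closedBall (0 : E) r).ultrafilter_le_nhds (U.map f) (by
    rw [le_principal_iff]
    change ∀ᶠ t in (U : Filter T), f t ∈ Metric.closedBall (0 : E) r
    filter_upwards [h] with t ht
    simpa using ht)
  exact ⟨a, ha⟩

lemma exists_limit {D : Set (Euc d)} (hD : IsCompact D) (hDconv : Convex ℝ D)
    (ν : Measure (Euc d)) [IsProbabilityMeasure ν] (hνD : ν Dᶜ = 0)
    (hac : ν ≪ (volume : Measure (Euc d)))
    (Φ : Euc d → ℝ) (hΦ : ContinuousOn Φ D)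
    (η : ℝ) (hη : 0 < η) (k : ℕ) (hk : 0 < k) :
    ∃ n, 0 < n ∧ n ≤ k ∧
      ∃ (Xs : Fin n → Euc d) (gs : Fin n → ℝ), Function.Injective Xs ∧
        (∀ i, 0 < cellMass D ν Xs gs i) ∧
        (∀ (X : Fin k → Euc d) (g : Fin k → ℝ), Function.Injective X →
          Fη D ν Φ η X g ≤ Fη D ν Φ η Xs gs) := by
  classical
  by_cases hne : ∃ X : Fin k → Euc d, Function.Injective X
  swap
  · refine ⟨1, one_pos, hk, fun _ => 0, fun _ => 0, Function.injective_of_subsingleton _, ?_, ?_⟩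
    · intro i
      have := one_le_sum_mass one_pos hD ν hνD (fun _ : Fin 1 => (0 : Euc d)) (fun _ => 0)
      rw [Fin.sum_univ_one] at this
      rw [Subsingleton.elim i 0]
      linarith
    · intro X g hX
      exact absurd ⟨X, hX⟩ hne
  obtain ⟨X₀, hX₀⟩ := hne
  obtain ⟨M, hM⟩ := hD.exists_bound_of_continuousOn hΦ
  obtain ⟨ρ, hρ⟩ := hD.exists_bound_of_continuousOn (continuousOn_id (s := D))
  simp only [id] at hρ
  have hDne : D.Nonempty := by
    by_contra hcon
    rw [not_nonempty_iff_eq_empty] at hcon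
    simp [hcon] at hνD
  have hM0 : 0 ≤ M := by
    obtain ⟨y, hy⟩ := hDne
    exact (norm_nonneg _).trans (hM y hy)
  have hFnle : ∀ (X : Fin k → Euc d) (g : Fin k → ℝ), Fn D ν Φ X g ≤ k * M := by
    intro X g
    rw [Fn_eq]
    calc _ ≤ ∑ _i : Fin k, M := Finset.sum_le_sum fun i _ =>
          (term_bound hD hDconv ν Φ hM X g i).trans
            (mul_le_of_le_one_right hM0 (cell_mass_le_one D ν X g i))
      _ = k * M := by simp
  have hR0 : ∀ (X : Fin k → Euc d) (g : Fin k → ℝ), 0 ≤ Rn D ν X g := fun X g =>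
    (mom_nonneg D ν X g ⟨0, hk⟩).trans (mom_le_Rn D ν X g ⟨0, hk⟩)
  set S : Set ℝ := {v | ∃ (X : Fin k → Euc d) (g : Fin k → ℝ), Function.Injective X ∧
    Fη D ν Φ η X g = v} with hS
  have hSne : S.Nonempty := ⟨_, X₀, 0, hX₀, rfl⟩
  have hSbdd : BddAbove S := by
    refine ⟨k * M, ?_⟩
    rintro _ ⟨X, g, -, rfl⟩
    have := hFnle X g
    have := mul_nonneg hη.le (hR0 X g)
    unfold Fη; linarith
  obtain ⟨v, -, hv, hvS⟩ := exists_seq_tendsto_sSup hSne hSbdd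
  set V := sSup S with hV
  choose X g hXinj hFv using hvS
  set U : Ultrafilter ℕ := Ultrafilter.of atTop with hU
  have hUle : (U : Filter ℕ) ≤ atTop := Ultrafilter.of_le _
  have hFlim : Tendsto (fun t => Fη D ν Φ η (X t) (g t)) U (𝓝 V) := by
    simp_rw [hFv]; exact hv.mono_left hUle
  -- bound of the penalty
  set B : ℝ := (k * M - (V - 1)) / η with hBdef
  have hRB : ∀ᶠ t in (U : Filter ℕ), Rn D ν (X t) (g t) ≤ B := by
    filter_upwards [hFlim.eventually (lt_mem_nhds (by linarith : V - 1 < V))] with t ht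
    rw [hBdef, le_div_iff₀ hη]
    have := hFnle (X t) (g t)
    unfold Fη at ht
    linarith
  -- limit masses
  have hmlim : ∀ i, ∃ a, Tendsto (fun t => cellMass D ν (X t) (g t) i) U (𝓝 a) := fun i =>
    ultra_lim U _ 1 (Eventually.of_forall fun t => by
      rw [Real.norm_of_nonneg (cell_mass_nonneg _ _ _ _ _)]
      exact cell_mass_le_one D ν _ _ _)
  choose μ hμ using hmlim
  have hμ0 : ∀ i, 0 ≤ μ i := fun i => ge_of_tendsto (hμ i)
    (Eventually.of_forall fun t => cell_mass_nonneg _ _ _ _ _)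
  have hμ1 : 1 ≤ ∑ i, μ i := ge_of_tendsto (tendsto_finsetSum Finset.univ fun i _ => hμ i)
    (Eventually.of_forall fun t => one_le_sum_mass hk hD ν hνD _ _)
  set I : Finset (Fin k) := Finset.univ.filter fun i => 0 < μ i with hI
  have hIne : I.Nonempty := by
    by_contra hcon
    rw [Finset.not_nonempty_iff_eq_empty] at hcon
    have : ∀ i, μ i = 0 := fun i => by
      refine le_antisymm (not_lt.1 fun h => ?_) (hμ0 i)
      have : i ∈ I := by simp [hI, h]
      simp [hcon] at this
    simp [this] at hμ1
    linarith
  set n := I.card with hn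
  set e : Fin n → Fin k := fun j => I.orderEmbOfFin rfl j with he
  have heinj : Function.Injective e := (I.orderEmbOfFin rfl).injective
  have hemem : ∀ j, 0 < μ (e j) := fun j => by
    have hj : e j ∈ I := I.orderEmbOfFin_mem rfl j
    exact (Finset.mem_filter.1 hj).2
  have herange : range e = I := Finset.range_orderEmbOfFin I rfl
  have hout : ∀ i, i ∉ range e → μ i = 0 := fun i hi => by
    rw [herange] at hi
    refine le_antisymm (not_lt.1 fun h => hi ?_) (hμ0 i)
    simp [hI, h]
  have hnpos : 0 < n := Finset.card_pos.2 hIne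
  have hnk : n ≤ k := by simpa using Finset.card_le_univ I
  have hmpos : ∀ j, ∀ᶠ t in (U : Filter ℕ), μ (e j) / 2 < cellMass D ν (X t) (g t) (e j) :=
    fun j => (hμ (e j)).eventually (lt_mem_nhds (half_lt_self (hemem j)))
  -- limit sites
  have hXbd : ∀ j, ∃ r, ∀ᶠ t in (U : Filter ℕ), ‖X t (e j)‖ ≤ r := by
    intro j
    refine ⟨√((2 * ρ ^ 2 + 2 * B) / (μ (e j) / 2)), ?_⟩
    filter_upwards [hRB, hmpos j] with t hR hm
    apply Real.le_sqrt_of_sq_le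
    rw [le_div_iff₀ (half_pos (hemem j))]
    set m := cellMass D ν (X t) (g t) (e j) with hmdef
    set L := LaguerreCell D (X t) (g t) (e j) with hL
    have hm1 : m ≤ 1 := cell_mass_le_one D ν _ _ _
    have h1 := (mom_le_Rn D ν (X t) (g t) (e j)).trans hR
    have h2 : ∫ _y in L, ‖X t (e j)‖ ^ 2 ∂ν ≤
        ∫ y in L, (2 * ρ ^ 2 + 2 * ‖y - X t (e j)‖ ^ 2) ∂ν := by
      refine setIntegral_mono_on ?_ ?_ (cell_meas hD _ _ _) ?_
      · exact continuous_const.continuousOn.integrableOn_compact (cell_compact hD _ _ _)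
      · exact (by fun_prop : Continuous fun y => 2 * ρ ^ 2 + 2 * ‖y - X t (e j)‖ ^ 2
          ).continuousOn.integrableOn_compact (cell_compact hD _ _ _)
      · intro y hy
        have ha := hρ y hy.1
        have hb : ‖X t (e j)‖ ≤ ‖y‖ + ‖y - X t (e j)‖ := by
          calc ‖X t (e j)‖ = ‖y - (y - X t (e j))‖ := by simp
            _ ≤ _ := norm_sub_le _ _
        have hc : ‖X t (e j)‖ ≤ ρ + ‖y - X t (e j)‖ := by linarith
        have hd := pow_le_pow_left₀ (norm_nonneg _) hc 2
        nlinarith [sq_nonneg (ρ - ‖y - X t (e j)‖)]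
    have h3 : ∫ y in L, (2 * ρ ^ 2 + 2 * ‖y - X t (e j)‖ ^ 2) ∂ν =
        m * (2 * ρ ^ 2) + 2 * ∫ y in L, ‖y - X t (e j)‖ ^ 2 ∂ν := by
      rw [integral_add, setIntegral_const, integral_const_mul]
      · rfl
      · exact continuous_const.continuousOn.integrableOn_compact (cell_compact hD _ _ _)
      · exact (by fun_prop : Continuous fun y => 2 * ‖y - X t (e j)‖ ^ 2
          ).continuousOn.integrableOn_compact (cell_compact hD _ _ _)
    have h4 : ∫ _y in L, ‖X t (e j)‖ ^ 2 ∂ν = m * ‖X t (e j)‖ ^ 2 := by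
      rw [setIntegral_const]; rfl
    rw [h3, h4] at h2
    nlinarith [sq_nonneg ‖X t (e j)‖, sq_nonneg ρ]
  choose r hr using hXbd
  have hYex : ∀ j, ∃ a, Tendsto (fun t => X t (e j)) U (𝓝 a) := fun j => ultra_lim U _ _ (hr j)
  choose Y hY using hYex
  have hYinj : Function.Injective Y := by
    intro j j' hjj
    by_contra hne
    have hlim : Tendsto (fun t => B * ‖X t (e j) - X t (e j')‖ ^ 2) U
        (𝓝 (B * ‖Y j - Y j'‖ ^ 2)) := (((hY j).sub (hY j')).norm.pow 2).const_mul B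
    have hle := le_of_tendsto_of_tendsto ((hμ (e j)).mul (hμ (e j'))) hlim (by
      filter_upwards [hRB] with t hR
      have h1 := (pen_le_Rn D ν (X t) (g t) (e j) (e j')).trans hR
      have h2 : 0 < ‖X t (e j) - X t (e j')‖ ^ 2 :=
        pow_pos (norm_pos_iff.2 (sub_ne_zero.2 ((hXinj t).ne (heinj.ne hne)))) 2
      rwa [div_le_iff₀ h2] at h1)
    have := mul_pos (hemem j) (hemem j')
    simp [hjj] at hle
    linarith
  -- limit weights
  set j0 : Fin n := ⟨0, hnpos⟩ with hj0
  have hub : ∀ j j', ∀ᶠ t in (U : Filter ℕ),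
      g t (e j) - g t (e j') ≤ (ρ + r j) ^ 2 := by
    intro j j'
    filter_upwards [hr j, hmpos j'] with t h1 h2
    have hne : (LaguerreCell D (X t) (g t) (e j')).Nonempty := by
      by_contra hcon
      rw [not_nonempty_iff_eq_empty] at hcon
      have : cellMass D ν (X t) (g t) (e j') = 0 := by simp [cellMass, hcon]
      have := hemem j'
      linarith
    obtain ⟨y, hy⟩ := hne
    have h3 := hy.2 (e j)
    have h4 : ‖y - X t (e j)‖ ≤ ρ + r j := (norm_sub_le _ _).trans (add_le_add (hρ y hy.1) h1)
    have h5 := pow_le_pow_left₀ (norm_nonneg _) h4 2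
    have h6 := sq_nonneg ‖y - X t (e j')‖
    linarith
  have hgex : ∀ j, ∃ a, Tendsto (fun t => g t (e j) - g t (e j0)) U (𝓝 a) := by
    intro j
    refine ultra_lim U _ (max ((ρ + r j) ^ 2) ((ρ + r j0) ^ 2)) ?_
    filter_upwards [hub j j0, hub j0 j] with t h1 h2
    rw [Real.norm_eq_abs, abs_le']
    exact ⟨h1.trans (le_max_left _ _), by rw [neg_sub]; exact h2.trans (le_max_right _ _)⟩
  choose h hh using hgex
  have hm0 : ∀ i, i ∉ range e → Tendsto (fun t => cellMass D ν (X t) (g t) i) U (𝓝 0) :=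
    fun i hi => by have := hμ i; rwa [hout i hi] at this
  have hmassL : ∀ j, Tendsto (fun t => cellMass D ν (X t) (g t) (e j)) U
      (𝓝 (cellMass D ν Y h j)) := by
    intro j
    simp_rw [cell_mass_eq_integral]
    exact limit_cell hk hD ν hac (fun _ _ => (1 : ℝ)) (by fun_prop) U X g
      (fun t => g t (e j0)) e Y h hYinj hY hh hm0 j
  have hmassμ : ∀ j, cellMass D ν Y h j = μ (e j) := fun j =>
    tendsto_nhds_unique (hmassL j) (hμ (e j))
  have hmassP : ∀ j, 0 < cellMass D ν Y h j := fun j => by rw [hmassμ]; exact hemem j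
  have hmomL : ∀ j, Tendsto
      (fun t => ∫ y in LaguerreCell D (X t) (g t) (e j), ‖y - X t (e j)‖ ^ 2 ∂ν) U
      (𝓝 (∫ y in LaguerreCell D Y h j, ‖y - Y j‖ ^ 2 ∂ν)) := fun j =>
    limit_cell hk hD ν hac (fun x y => ‖y - x‖ ^ 2) (by unfold Function.uncurry; fun_prop) U X g
      (fun t => g t (e j0)) e Y h hYinj hY hh hm0 j
  have hfirL : ∀ j, Tendsto
      (fun t => ∫ y in LaguerreCell D (X t) (g t) (e j), y ∂ν) U
      (𝓝 (∫ y in LaguerreCell D Y h j, y ∂ν)) := fun j =>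
    limit_cell hk hD ν hac (fun _ y => y) (by unfold Function.uncurry; fun_prop) U X g
      (fun t => g t (e j0)) e Y h hYinj hY hh hm0 j
  have hbarL : ∀ j, Tendsto (fun t => cellBary D ν (X t) (g t) (e j)) U
      (𝓝 (cellBary D ν Y h j)) := fun j =>
    ((hmassL j).inv₀ (hmassP j).ne').smul (hfirL j)
  have hΦL : ∀ j, Tendsto (fun t => Φ (cellBary D ν (X t) (g t) (e j))) U
      (𝓝 (Φ (cellBary D ν Y h j))) := by
    intro j
    have hc := hΦ _ (bary_mem hD hDconv ν Y h j (hmassP j))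
    refine hc.tendsto.comp (tendsto_nhdsWithin_iff.2 ⟨hbarL j, ?_⟩)
    filter_upwards [hmpos j] with t ht
    exact bary_mem hD hDconv ν _ _ _ ((half_pos (hemem j)).trans ht)
  have hpenL : ∀ j j', Tendsto (fun t => cellMass D ν (X t) (g t) (e j) *
      cellMass D ν (X t) (g t) (e j') / ‖X t (e j) - X t (e j')‖ ^ 2) U
      (𝓝 (cellMass D ν Y h j * cellMass D ν Y h j' / ‖Y j - Y j'‖ ^ 2)) := by
    intro j j'
    by_cases hjj : j = j'
    · subst hjj; simp
    · refine ((hmassL j).mul (hmassL j')).div (((hY j).sub (hY j')).norm.pow 2) ?_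
      exact pow_ne_zero 2 (norm_ne_zero_iff.2 (sub_ne_zero.2 (hYinj.ne hjj)))
  refine ⟨n, hnpos, hnk, Y, h, hYinj, hmassP, ?_⟩
  have hsplit : ∀ φ : Fin k → ℝ, ∑ i, φ i = ∑ j, φ (e j) + ∑ i ∈ Iᶜ, φ i := by
    intro φ
    rw [← Finset.sum_add_sum_compl I φ]
    congr 1
    have himg : I = Finset.univ.image e := by
      apply Finset.coe_injective
      rw [Finset.coe_image, Finset.coe_univ, image_univ, herange]
    rw [himg, Finset.sum_image (fun a _ b _ hab => heinj hab)]
  have hsub : ∀ φ : Fin k → ℝ, (∀ i, 0 ≤ φ i) → ∑ j, φ (e j) ≤ ∑ i, φ i := by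
    intro φ hφ
    rw [hsplit φ]
    exact le_add_of_nonneg_right (Finset.sum_nonneg fun i _ => hφ i)
  have hG : Tendsto (fun t =>
      (∑ j, cellMass D ν (X t) (g t) (e j) * Φ (cellBary D ν (X t) (g t) (e j))
        + ∑ i ∈ Iᶜ, M * cellMass D ν (X t) (g t) i)
      - η * ((∑ j, ∫ y in LaguerreCell D (X t) (g t) (e j), ‖y - X t (e j)‖ ^ 2 ∂ν)
        + ∑ j, ∑ j', cellMass D ν (X t) (g t) (e j) *
          cellMass D ν (X t) (g t) (e j') / ‖X t (e j) - X t (e j')‖ ^ 2)) U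
      (𝓝 (Fη D ν Φ η Y h)) := by
    have hz : Tendsto (fun t => ∑ i ∈ Iᶜ, M * cellMass D ν (X t) (g t) i) U (𝓝 0) := by
      have := tendsto_finsetSum (f := fun i t => M * cellMass D ν (X t) (g t) i)
        (a := fun _ => (0 : ℝ)) (x := (U : Filter ℕ)) Iᶜ (fun i hi => by
        have h1 := (hm0 i (by rw [herange]; simpa using hi)).const_mul M
        simpa using h1)
      simpa using this
    have hF1 := (tendsto_finsetSum Finset.univ fun j _ => (hmassL j).mul (hΦL j)).add hz
    have hR1 := (tendsto_finsetSum Finset.univ fun j _ => hmomL j).add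
      (tendsto_finsetSum Finset.univ fun j _ => tendsto_finsetSum Finset.univ fun j' _ =>
        hpenL j j')
    have := hF1.sub (hR1.const_mul η)
    rw [add_zero, ← Fn_eq, ← Rn_eq] at this
    exact this
  have hVle : V ≤ Fη D ν Φ η Y h := by
    refine le_of_tendsto_of_tendsto hFlim hG (Eventually.of_forall fun t => ?_)
    dsimp only
    unfold Fη
    rw [Fn_eq, Rn_eq]
    refine sub_le_sub ?_ (mul_le_mul_of_nonneg_left (add_le_add ?_ ?_) hη.le)
    · rw [hsplit]
      exact add_le_add le_rfl (Finset.sum_le_sum fun i _ =>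
        term_bound hD hDconv ν Φ hM _ _ i)
    · exact hsub (fun i => ∫ y in LaguerreCell D (X t) (g t) i, ‖y - X t i‖ ^ 2 ∂ν)
        (fun i => mom_nonneg D ν _ _ _)
    · calc _ ≤ ∑ j, ∑ i', cellMass D ν (X t) (g t) (e j) *
            cellMass D ν (X t) (g t) i' / ‖X t (e j) - X t i'‖ ^ 2 :=
          Finset.sum_le_sum fun j _ => hsub (fun i' => cellMass D ν (X t) (g t) (e j) *
            cellMass D ν (X t) (g t) i' / ‖X t (e j) - X t i'‖ ^ 2)
            (fun i' => pen_nonneg D ν _ _ _ _)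
        _ ≤ _ := hsub (fun i => ∑ i', cellMass D ν (X t) (g t) i *
            cellMass D ν (X t) (g t) i' / ‖X t i - X t i'‖ ^ 2)
            (fun i => Finset.sum_nonneg fun i' _ => pen_nonneg D ν _ _ _ _)
  intro X' g' hX'
  exact (le_csSup hSbdd ⟨X', g', hX', rfl⟩).trans hVle

end Main

/-- Theorem on existence of maximizers of `F_n^η`: for every number of sites
`l` there is `n ≤ l` such that the penalized functional `F_n^η` admits a maximizer `(X*, g*)`
over `n`-tuples of pairwise distinct sites and weights, with all cell masses positive, whose
value dominates the supremum of `F_l^η`. -/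
theorem penalized_functional_attains_max
    {d : ℕ} (D : Set (Euc d)) (hD : IsCompact D) (hDconv : Convex ℝ D)
    (ν : Measure (Euc d)) [IsProbabilityMeasure ν] (hνD : ν Dᶜ = 0)
    (hac : ν ≪ (volume : Measure (Euc d)))
    (C : ℝ) (hC : ∀ᵐ x ∂(volume : Measure (Euc d)), (ν.rnDeriv volume x).toReal ≤ C)
    (Φ : Euc d → ℝ) (hΦ : ContinuousOn Φ D)
    (η : ℝ) (hη : 0 < η) (l : ℕ) (hl : 0 < l) :
    ∃ n, 0 < n ∧ n ≤ l ∧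
      ∃ (Xs : Fin n → Euc d) (gs : Fin n → ℝ), Function.Injective Xs ∧
        (∀ i, 0 < cellMass D ν Xs gs i) ∧
        (∀ (X : Fin n → Euc d) (g : Fin n → ℝ), Function.Injective X →
          Fη D ν Φ η X g ≤ Fη D ν Φ η Xs gs) ∧
        (∀ (X : Fin l → Euc d) (g : Fin l → ℝ), Function.Injective X →
          Fη D ν Φ η X g ≤ Fη D ν Φ η Xs gs) := by
  induction l using Nat.strong_induction_on with
  | _ l ih =>
    obtain ⟨n, hn, hnl, Xs, gs, hinj, hpos, hmax⟩ :=
      exists_limit hD hDconv ν hνD hac Φ hΦ η hη l hl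
    rcases hnl.eq_or_lt with rfl | hlt
    · exact ⟨n, hn, le_rfl, Xs, gs, hinj, hpos, hmax, hmax⟩
    · obtain ⟨n', hn', hnn, Xs', gs', hinj', hpos', hmax', hmax''⟩ := ih n hlt hn
      exact ⟨n', hn', hnn.trans hnl, Xs', gs', hinj', hpos', hmax', fun X g hX =>
        (hmax X g hX).trans (hmax'' Xs gs hinj)⟩
end
end

section
/- Let D ⊂ ℝ^d be compact and convex, ν a probability measure on D absolutely continuous with respect to Lebesgue measure, ε > 0, η > 0, and Φ ∈ C(D). Then for every given number of sites l ∈ ℕ there exists n ≤ l such that the entropy-regularized penalized functional F_n^{η,ε}(X,g) = Σ_i m_i^ε[X,g] Φ(b_i^ε[X,g]) − η R_n^ε(X,g) admits a maximizer (X*,g*) over n-tuples of pairwise distinct sites and weight vectors, with m_i^ε[X*,g*] > 0 for all i = 1,…,n, and F_n^{η,ε}(X*,g*) ≥ sup_{(X,g)} F_l^{η,ε}(X,g). -/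
open MeasureTheory Set Filter Topology
open scoped ENNReal NNReal

noncomputable section

/-- Entropy-regularized cell function
`χ_i^ε[X,g](y) = exp((g_i − |y−x_i|²)/ε) / Σ_j exp((g_j − |y−x_j|²)/ε)`. -/
def chiEps {d n : ℕ} (X : Fin n → Euc d) (g : Fin n → ℝ) (ε : ℝ) (i : Fin n)
    (y : Euc d) : ℝ :=
  Real.exp ((g i - ‖y - X i‖ ^ 2) / ε) / ∑ j, Real.exp ((g j - ‖y - X j‖ ^ 2) / ε)

/-- Regularized mass `m_i^ε[X,g] = ∫ χ_i^ε[X,g] dν`. -/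
def mEps {d n : ℕ} (ν : Measure (Euc d)) (X : Fin n → Euc d) (g : Fin n → ℝ) (ε : ℝ)
    (i : Fin n) : ℝ :=
  ∫ y, chiEps X g ε i y ∂ν

/-- Regularized barycenter `b_i^ε[X,g] = (m_i^ε)⁻¹ ∫ y χ_i^ε[X,g](y) dν(y)`. -/
def bEps {d n : ℕ} (ν : Measure (Euc d)) (X : Fin n → Euc d) (g : Fin n → ℝ) (ε : ℝ)
    (i : Fin n) : Euc d :=
  (mEps ν X g ε i)⁻¹ • ∫ y, chiEps X g ε i y • y ∂ν

/-- Entropy-regularized objective `F_n^ε[X,g] = Σ_i m_i^ε[X,g] Φ(b_i^ε[X,g])`. -/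
def FnEps {d n : ℕ} (ν : Measure (Euc d)) (Φ : Euc d → ℝ) (X : Fin n → Euc d)
    (g : Fin n → ℝ) (ε : ℝ) : ℝ :=
  ∑ i, mEps ν X g ε i * Φ (bEps ν X g ε i)

/-- Entropy-regularized penalty `R_n^ε[X,g]`. -/
def RnEps {d n : ℕ} (ν : Measure (Euc d)) (X : Fin n → Euc d) (g : Fin n → ℝ) (ε : ℝ) : ℝ :=
  (∑ i, ∫ y, ‖y - X i‖ ^ 2 * chiEps X g ε i y ∂ν)
  + ∑ i, ∑ j, if i ≠ j then mEps ν X g ε i * mEps ν X g ε j / ‖X i - X j‖ ^ 2 else 0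

/-- Entropy-regularized penalized objective `F_n^{η,ε} = F_n^ε − η R_n^ε`. -/
def FηEps {d n : ℕ} (ν : Measure (Euc d)) (Φ : Euc d → ℝ) (η : ℝ) (X : Fin n → Euc d)
    (g : Fin n → ℝ) (ε : ℝ) : ℝ :=
  FnEps ν Φ X g ε - η * RnEps ν X g ε

section Helpers

variable {d : ℕ}

lemma hp_sum_pos {n : ℕ} (X : Fin n → Euc d) (g : Fin n → ℝ) (ε : ℝ) (i : Fin n) (y : Euc d) :
    0 < ∑ j, Real.exp ((g j - ‖y - X j‖ ^ 2) / ε) :=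
  Finset.sum_pos (fun _ _ => Real.exp_pos _) ⟨i, Finset.mem_univ i⟩

lemma hp_chi_pos {n : ℕ} (X : Fin n → Euc d) (g : Fin n → ℝ) (ε : ℝ) (i : Fin n) (y : Euc d) :
    0 < chiEps X g ε i y :=
  div_pos (Real.exp_pos _) (hp_sum_pos X g ε i y)

lemma hp_chi_sum {n : ℕ} (hn : 0 < n) (X : Fin n → Euc d) (g : Fin n → ℝ) (ε : ℝ) (y : Euc d) :
    ∑ i, chiEps X g ε i y = 1 := by
  unfold chiEps
  rw [← Finset.sum_div]
  exact div_self (hp_sum_pos X g ε ⟨0, hn⟩ y).ne'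

lemma hp_chi_cont {n : ℕ} (ε : ℝ) (i : Fin n) :
    Continuous (fun p : ((Fin n → Euc d) × (Fin n → ℝ)) × Euc d =>
      chiEps p.1.1 p.1.2 ε i p.2) := by
  unfold chiEps
  refine Continuous.div ?_ ?_ (fun p => (hp_sum_pos p.1.1 p.1.2 ε i p.2).ne')
  · simp only [div_eq_mul_inv]; fun_prop
  · simp only [div_eq_mul_inv]; fun_prop

lemma hp_chi_cont' {n : ℕ} (X : Fin n → Euc d) (g : Fin n → ℝ) (ε : ℝ) (i : Fin n) :
    Continuous (chiEps X g ε i) :=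
  (hp_chi_cont ε i).comp (by fun_prop : Continuous (fun y : Euc d => ((X, g), y)))

lemma hp_chi_shift {n : ℕ} (X : Fin n → Euc d) (g : Fin n → ℝ) (ε c : ℝ) (i : Fin n) :
    chiEps X (fun j => g j - c) ε i = chiEps X g ε i := by
  funext y
  unfold chiEps
  have h : ∀ j, Real.exp ((g j - c - ‖y - X j‖ ^ 2) / ε)
      = Real.exp ((g j - ‖y - X j‖ ^ 2) / ε) * Real.exp (-c / ε) := by
    intro j; rw [← Real.exp_add]; congr 1; ring
  simp only [h]
  rw [← Finset.sum_mul, mul_div_mul_right _ _ (Real.exp_pos _).ne']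

lemma hp_sum_emb {N n : ℕ} (e : Fin N ↪ Fin n) (f : Fin n → ℝ) (hf : ∀ i, 0 ≤ f i) :
    ∑ a, f (e a) ≤ ∑ i, f i := by
  rw [← Finset.sum_map Finset.univ e f]
  exact Finset.sum_le_univ_sum_of_nonneg hf

lemma hp_chi_le_sub {N n : ℕ} (e : Fin N ↪ Fin n) (X : Fin n → Euc d) (g : Fin n → ℝ) (ε c : ℝ)
    (a : Fin N) (y : Euc d) :
    chiEps X g ε (e a) y ≤ chiEps (fun b => X (e b)) (fun b => g (e b) - c) ε a y := by
  rw [show chiEps (fun b => X (e b)) (fun b => g (e b) - c) ε a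
    = chiEps (fun b => X (e b)) (fun b => g (e b)) ε a from hp_chi_shift _ (fun b => g (e b)) ε c a]
  unfold chiEps
  apply div_le_div_of_nonneg_left (Real.exp_pos _).le
    (hp_sum_pos (fun b => X (e b)) (fun b => g (e b)) ε a y)
  exact hp_sum_emb e (fun i => Real.exp ((g i - ‖y - X i‖ ^ 2) / ε)) (fun _ => (Real.exp_pos _).le)

variable {D : Set (Euc d)} (hD : IsCompact D) {ν : Measure (Euc d)} [IsProbabilityMeasure ν]
  (hνD : ν Dᶜ = 0)

lemma hp_ae {D : Set (Euc d)} {ν : Measure (Euc d)} (hνD : ν Dᶜ = 0) : ∀ᵐ y ∂ν, y ∈ D := by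
  rw [ae_iff]; exact hνD

lemma hp_restrict {D : Set (Euc d)} {ν : Measure (Euc d)} (hνD : ν Dᶜ = 0) : ν.restrict D = ν :=
  Measure.restrict_eq_self_of_ae_mem (hp_ae hνD)

lemma hp_int {D : Set (Euc d)} (hD : IsCompact D) {ν : Measure (Euc d)} [IsProbabilityMeasure ν]
    (hνD : ν Dᶜ = 0) {E : Type*} [NormedAddCommGroup E]
    {f : Euc d → E} (hf : Continuous f) : Integrable f ν := by
  have := hf.continuousOn.integrableOn_compact (μ := ν) hD
  rwa [IntegrableOn, hp_restrict hνD] at this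

lemma hp_cont_int {D : Set (Euc d)} (hD : IsCompact D) {ν : Measure (Euc d)}
    [IsProbabilityMeasure ν] (hνD : ν Dᶜ = 0) {E : Type*} [NormedAddCommGroup E] [NormedSpace ℝ E]
    {n : ℕ}
    {f : ((Fin n → Euc d) × (Fin n → ℝ)) → Euc d → E} (hf : Continuous (Function.uncurry f)) :
    Continuous (fun p => ∫ y, f p y ∂ν) := by
  have := continuous_parametric_integral_of_continuous (μ := ν) hf hD
  rwa [hp_restrict hνD] at this

lemma hp_m_pos {D : Set (Euc d)} (hD : IsCompact D) {ν : Measure (Euc d)}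
    [IsProbabilityMeasure ν] (hνD : ν Dᶜ = 0) {n : ℕ}
    (X : Fin n → Euc d) (g : Fin n → ℝ) (ε : ℝ) (i : Fin n) : 0 < mEps ν X g ε i := by
  unfold mEps
  rw [integral_pos_iff_support_of_nonneg (fun y => (hp_chi_pos X g ε i y).le)
    (hp_int hD hνD (hp_chi_cont' X g ε i))]
  have : Function.support (chiEps X g ε i) = Set.univ :=
    Set.eq_univ_of_forall fun y => (hp_chi_pos X g ε i y).ne'
  rw [this]; simp

lemma hp_m_sum {D : Set (Euc d)} (hD : IsCompact D) {ν : Measure (Euc d)}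
    [IsProbabilityMeasure ν] (hνD : ν Dᶜ = 0) {n : ℕ} (hn : 0 < n)
    (X : Fin n → Euc d) (g : Fin n → ℝ) (ε : ℝ) : ∑ i, mEps ν X g ε i = 1 := by
  unfold mEps
  rw [← integral_finsetSum _ (fun i _ => hp_int hD hνD (hp_chi_cont' X g ε i))]
  simp [hp_chi_sum hn]

lemma hp_b_mem {D : Set (Euc d)} (hD : IsCompact D) (hc : Convex ℝ D) {ν : Measure (Euc d)}
    [IsProbabilityMeasure ν] (hνD : ν Dᶜ = 0) {n : ℕ}
    (X : Fin n → Euc d) (g : Fin n → ℝ) (ε : ℝ) (i : Fin n) : bEps ν X g ε i ∈ D := by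
  set χ := chiEps X g ε i with hχ
  have hχc : Continuous χ := hp_chi_cont' X g ε i
  have hχp : ∀ y, 0 < χ y := hp_chi_pos X g ε i
  have hmeas : Measurable (fun y => ENNReal.ofReal (χ y)) := hχc.measurable.ennreal_ofReal
  set μ := ν.withDensity (fun y => ENNReal.ofReal (χ y)) with hμ
  have huniv : μ Set.univ = ENNReal.ofReal (mEps ν X g ε i) := by
    rw [hμ, withDensity_apply _ MeasurableSet.univ, Measure.restrict_univ, mEps,
      ofReal_integral_eq_lintegral_ofReal (hp_int hD hνD hχc)
        (Filter.Eventually.of_forall fun y => (hχp y).le)]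
  have hmp := hp_m_pos hD hνD X g ε i
  have : IsFiniteMeasure μ := ⟨by rw [huniv]; exact ENNReal.ofReal_lt_top⟩
  have : NeZero μ := ⟨by
    intro h
    rw [h] at huniv
    have := ENNReal.ofReal_pos.2 hmp
    simp at huniv; linarith⟩
  have hac : μ ≪ ν := withDensity_absolutelyContinuous _ _
  have hint : ∀ (f : Euc d → Euc d), ∫ y, f y ∂μ = ∫ y, χ y • f y ∂ν := by
    intro f
    rw [hμ, integral_withDensity_eq_integral_toReal_smul hmeas
      (Filter.Eventually.of_forall fun y => ENNReal.ofReal_lt_top)]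
    refine integral_congr_ae (Filter.Eventually.of_forall fun y => ?_)
    simp [ENNReal.toReal_ofReal (hχp y).le]
  have hi : Integrable (fun y : Euc d => y) μ := by
    rw [hμ, integrable_withDensity_iff_integrable_smul' hmeas
      (Filter.Eventually.of_forall fun y => ENNReal.ofReal_lt_top)]
    refine (hp_int hD hνD (hχc.smul continuous_id)).congr
      (Filter.Eventually.of_forall fun y => ?_)
    simp [ENNReal.toReal_ofReal (hχp y).le]
  have key := hc.average_mem hD.isClosed (hac.ae_le (hp_ae hνD)) hi
  rw [average_eq, hint, measureReal_def, huniv, ENNReal.toReal_ofReal hmp.le] at key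
  exact key

/-- difference estimate between full and restricted softmax -/
lemma hp_diff {D : Set (Euc d)} (hD : IsCompact D) {ν : Measure (Euc d)}
    [IsProbabilityMeasure ν] (hνD : ν Dᶜ = 0) {N n : ℕ} (e : Fin N ↪ Fin n)
    (X : Fin n → Euc d) (g : Fin n → ℝ) (ε c : ℝ) (a : Fin N)
    {E : Type*} [NormedAddCommGroup E] [NormedSpace ℝ E] (w : Euc d → E) (hw : Continuous w)
    (B : ℝ) (hB : ∀ y ∈ D, ‖w y‖ ≤ B) :
    ‖(∫ y, chiEps (fun b => X (e b)) (fun b => g (e b) - c) ε a y • w y ∂ν)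
      - ∫ y, chiEps X g ε (e a) y • w y ∂ν‖ ≤ B * (1 - ∑ b, mEps ν X g ε (e b)) := by
  have hN : 0 < N := a.pos
  have c1 := hp_chi_cont' (fun b => X (e b)) (fun b => g (e b) - c) ε a
  have c2 := hp_chi_cont' X g ε (e a)
  have h1 : (1 - ∑ b, mEps ν X g ε (e b)) = ∫ y, (1 - ∑ b, chiEps X g ε (e b) y) ∂ν := by
    rw [integral_sub (integrable_const _)
      (integrable_finsetSum _ fun b _ => hp_int hD hνD (hp_chi_cont' X g ε (e b))),
      integral_finsetSum _ fun b _ => hp_int hD hνD (hp_chi_cont' X g ε (e b))]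
    simp [mEps]
  have i1 : Integrable (fun y => chiEps (fun b => X (e b)) (fun b => g (e b) - c) ε a y • w y) ν :=
    hp_int hD hνD (c1.smul hw)
  have i2 : Integrable (fun y => chiEps X g ε (e a) y • w y) ν := hp_int hD hνD (c2.smul hw)
  rw [← integral_sub i1 i2, h1, ← integral_const_mul]
  refine norm_integral_le_of_norm_le (hp_int hD hνD ?_) ?_
  · exact continuous_const.mul (continuous_const.sub
      (continuous_finsetSum _ fun b _ => hp_chi_cont' X g ε (e b)))
  · filter_upwards [hp_ae hνD] with y hy
    rw [← sub_smul, norm_smul, mul_comm]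
    have hle := fun b => hp_chi_le_sub e X g ε c b y
    have hs := hp_chi_sum hN (fun b => X (e b)) (fun b => g (e b) - c) ε y
    have h0 : 0 ≤ chiEps (fun b => X (e b)) (fun b => g (e b) - c) ε a y
        - chiEps X g ε (e a) y := sub_nonneg.2 (hle a)
    have h2 : chiEps (fun b => X (e b)) (fun b => g (e b) - c) ε a y
        - chiEps X g ε (e a) y ≤ 1 - ∑ b, chiEps X g ε (e b) y := by
      rw [← hs, ← Finset.sum_sub_distrib]
      exact Finset.single_le_sum (f := fun b =>
        chiEps (fun b => X (e b)) (fun b => g (e b) - c) ε b y - chiEps X g ε (e b) y)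
        (fun b _ => sub_nonneg.2 (hle b)) (Finset.mem_univ a)
    rw [Real.norm_of_nonneg h0]
    exact mul_le_mul (hB y hy) h2 h0 ((norm_nonneg _).trans (hB y hy))

/-- passing to the limit in weighted integrals -/
lemma hp_lim {D : Set (Euc d)} (hD : IsCompact D) {ν : Measure (Euc d)}
    [IsProbabilityMeasure ν] (hνD : ν Dᶜ = 0) {N n : ℕ} (e : Fin N ↪ Fin n)
    {ι : Type*} {U : Filter ι} (X : ι → Fin n → Euc d) (g : ι → Fin n → ℝ) (ε : ℝ) (c : ι → ℝ)
    (Y : Fin N → Euc d) (h : Fin N → ℝ)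
    (hX : Tendsto (fun k => fun b => X k (e b)) U (𝓝 Y))
    (hg : Tendsto (fun k => fun b => g k (e b) - c k) U (𝓝 h))
    (hm : Tendsto (fun k => ∑ b, mEps ν (X k) (g k) ε (e b)) U (𝓝 1))
    (a : Fin N)
    {E : Type*} [NormedAddCommGroup E] [NormedSpace ℝ E] (w : Euc d → Euc d → E)
    (hw : Continuous (fun p : Euc d × Euc d => w p.1 p.2))
    (B : Euc d → ℝ) (hBc : Continuous B) (hB : ∀ x, ∀ y ∈ D, ‖w x y‖ ≤ B x) :
    Tendsto (fun k => ∫ y, chiEps (X k) (g k) ε (e a) y • w (X k (e a)) y ∂ν) U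
      (𝓝 (∫ y, chiEps Y h ε a y • w (Y a) y ∂ν)) := by
  have hcont : Continuous (fun p : (Fin N → Euc d) × (Fin N → ℝ) =>
      ∫ y, chiEps p.1 p.2 ε a y • w (p.1 a) y ∂ν) := by
    have hw2 : Continuous (fun p : ((Fin N → Euc d) × (Fin N → ℝ)) × Euc d =>
        w (p.1.1 a) p.2) :=
      hw.comp (by fun_prop : Continuous
        (fun p : ((Fin N → Euc d) × (Fin N → ℝ)) × Euc d => (p.1.1 a, p.2)))
    exact hp_cont_int hD hνD (f := fun p y => chiEps p.1 p.2 ε a y • w (p.1 a) y)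
      ((hp_chi_cont ε a).smul hw2)
  have h1 : Tendsto (fun k => ∫ y, chiEps (fun b => X k (e b)) (fun b => g k (e b) - c k) ε a y
      • w (X k (e a)) y ∂ν) U (𝓝 (∫ y, chiEps Y h ε a y • w (Y a) y ∂ν)) := by
    have hpair : Tendsto (fun k => ((fun b => X k (e b)), (fun b => g k (e b) - c k))) U
      (𝓝 (Y, h)) := hX.prodMk_nhds hg
    have h0 := Filter.Tendsto.comp (hcont.tendsto (Y, h)) hpair
    simpa only [Function.comp_def] using h0
  have hXa : Tendsto (fun k => X k (e a)) U (𝓝 (Y a)) := (tendsto_pi_nhds.1 hX) a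
  have h2 : Tendsto (fun k => (∫ y, chiEps (fun b => X k (e b)) (fun b => g k (e b) - c k) ε a y
      • w (X k (e a)) y ∂ν) - ∫ y, chiEps (X k) (g k) ε (e a) y • w (X k (e a)) y ∂ν) U (𝓝 0) := by
    refine squeeze_zero_norm (a := fun k => B (X k (e a)) *
      (1 - ∑ b, mEps ν (X k) (g k) ε (e b))) (fun k => ?_) ?_
    · exact hp_diff hD hνD e (X k) (g k) ε (c k) a (w (X k (e a)))
        (hw.comp (by fun_prop : Continuous (fun y : Euc d => (X k (e a), y)))) _ (hB _)
    · have := ((hBc.tendsto (Y a)).comp hXa).mul ((tendsto_const_nhds (x := (1:ℝ))).sub hm)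
      simpa using this
  simpa using h1.sub h2

lemma hp_R_term_nonneg {n : ℕ} (hD : IsCompact D) (hνD : ν Dᶜ = 0)
    (X : Fin n → Euc d) (g : Fin n → ℝ) (ε : ℝ) (i j : Fin n) :
    0 ≤ (if i ≠ j then mEps ν X g ε i * mEps ν X g ε j / ‖X i - X j‖ ^ 2 else 0) := by
  have := hp_m_pos hD hνD X g ε i
  have := hp_m_pos hD hνD X g ε j
  split_ifs <;> positivity

lemma hp_R_int_nonneg {n : ℕ}
    (X : Fin n → Euc d) (g : Fin n → ℝ) (ε : ℝ) (i : Fin n) :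
    0 ≤ ∫ y, ‖y - X i‖ ^ 2 * chiEps X g ε i y ∂ν :=
  integral_nonneg fun y => mul_nonneg (sq_nonneg _) (hp_chi_pos X g ε i y).le

/-- upper bound of the functional by the restricted functional -/
lemma hp_upper {D : Set (Euc d)} (hD : IsCompact D) (hc : Convex ℝ D) {ν : Measure (Euc d)}
    [IsProbabilityMeasure ν] (hνD : ν Dᶜ = 0) {N n : ℕ} (hn : 0 < n) (e : Fin N ↪ Fin n)
    (Φ : Euc d → ℝ) (C : ℝ) (hC : ∀ x ∈ D, ‖Φ x‖ ≤ C)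
    (X : Fin n → Euc d) (g : Fin n → ℝ) (ε η : ℝ) (hη : 0 < η) :
    FηEps ν Φ η X g ε ≤
      (∑ a, mEps ν X g ε (e a) * Φ (bEps ν X g ε (e a))) + C * (1 - ∑ a, mEps ν X g ε (e a))
      - η * ((∑ a, ∫ y, ‖y - X (e a)‖ ^ 2 * chiEps X g ε (e a) y ∂ν)
        + ∑ a, ∑ b, if a ≠ b then
            mEps ν X g ε (e a) * mEps ν X g ε (e b) / ‖X (e a) - X (e b)‖ ^ 2 else 0) := by
  have h1 := hp_sum_emb e (fun i => C * mEps ν X g ε i - mEps ν X g ε i * Φ (bEps ν X g ε i))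
    (fun i => by
      have h1 := hC _ (hp_b_mem hD hc hνD X g ε i)
      have h2 := hp_m_pos hD hνD X g ε i
      have := le_of_abs_le h1
      nlinarith)
  rw [Finset.sum_sub_distrib, Finset.sum_sub_distrib, ← Finset.mul_sum, ← Finset.mul_sum,
    hp_m_sum hD hνD hn] at h1
  have h2 := hp_sum_emb e (fun i => ∫ y, ‖y - X i‖ ^ 2 * chiEps X g ε i y ∂ν)
    (hp_R_int_nonneg X g ε)
  have h3 : (∑ a, ∑ b, if a ≠ b then
      mEps ν X g ε (e a) * mEps ν X g ε (e b) / ‖X (e a) - X (e b)‖ ^ 2 else 0)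
      ≤ ∑ i, ∑ j, if i ≠ j then mEps ν X g ε i * mEps ν X g ε j / ‖X i - X j‖ ^ 2 else 0 := by
    refine le_trans ?_ (hp_sum_emb e (fun i => ∑ j, if i ≠ j then
      mEps ν X g ε i * mEps ν X g ε j / ‖X i - X j‖ ^ 2 else 0)
      (fun i => Finset.sum_nonneg fun j _ => hp_R_term_nonneg hD hνD X g ε i j))
    refine Finset.sum_le_sum fun a _ => ?_
    refine le_trans (le_of_eq ?_) (hp_sum_emb e (fun j => if e a ≠ j then
      mEps ν X g ε (e a) * mEps ν X g ε j / ‖X (e a) - X j‖ ^ 2 else 0)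
      (fun j => hp_R_term_nonneg hD hνD X g ε (e a) j))
    refine Finset.sum_congr rfl fun b _ => ?_
    simp [e.injective.eq_iff]
  unfold FηEps FnEps RnEps
  have := mul_le_mul_of_nonneg_left (add_le_add h2 h3) hη.le
  linarith

lemma hp_core {D : Set (Euc d)} (hD : IsCompact D) (hc : Convex ℝ D) {ν : Measure (Euc d)}
    [IsProbabilityMeasure ν] (hνD : ν Dᶜ = 0) {N n : ℕ} (hn : 0 < n) (e : Fin N ↪ Fin n)
    (Φ : Euc d → ℝ) (hΦ : ContinuousOn Φ D)
    {ι : Type*} {U : Filter ι} [U.NeBot] (X : ι → Fin n → Euc d) (g : ι → Fin n → ℝ)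
    (ε η : ℝ) (hη : 0 < η) (c : ι → ℝ)
    (Y : Fin N → Euc d) (h : Fin N → ℝ) (hY : Function.Injective Y)
    (hX : Tendsto (fun k => fun b => X k (e b)) U (𝓝 Y))
    (hg : Tendsto (fun k => fun b => g k (e b) - c k) U (𝓝 h))
    (hm : Tendsto (fun k => ∑ b, mEps ν (X k) (g k) ε (e b)) U (𝓝 1))
    (L : ℝ) (hL : Tendsto (fun k => FηEps ν Φ η (X k) (g k) ε) U (𝓝 L)) :
    L ≤ FηEps ν Φ η Y h ε := by
  obtain ⟨C, hC⟩ := hD.exists_bound_of_continuousOn hΦ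
  obtain ⟨R, hR⟩ := hD.isBounded.exists_norm_le
  have tm : ∀ a, Tendsto (fun k => mEps ν (X k) (g k) ε (e a)) U (𝓝 (mEps ν Y h ε a)) := by
    intro a
    have := hp_lim hD hνD e X g ε c Y h hX hg hm a (fun _ _ => (1:ℝ)) continuous_const
      (fun _ => 1) continuous_const (by simp)
    simpa [mEps] using this
  have tv : ∀ a, Tendsto (fun k => ∫ y, chiEps (X k) (g k) ε (e a) y • y ∂ν) U
      (𝓝 (∫ y, chiEps Y h ε a y • y ∂ν)) := by
    intro a
    exact hp_lim hD hνD e X g ε c Y h hX hg hm a (fun _ y => y) continuous_snd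
      (fun _ => R) continuous_const (fun _ y hy => hR y hy)
  have tq : ∀ a, Tendsto (fun k => ∫ y, ‖y - X k (e a)‖ ^ 2 * chiEps (X k) (g k) ε (e a) y ∂ν) U
      (𝓝 (∫ y, ‖y - Y a‖ ^ 2 * chiEps Y h ε a y ∂ν)) := by
    intro a
    have := hp_lim hD hνD e X g ε c Y h hX hg hm a (fun x y => ‖y - x‖ ^ 2) (by fun_prop)
      (fun x => (R + ‖x‖) ^ 2) (by fun_prop) (fun x y hy => by
        rw [Real.norm_of_nonneg (sq_nonneg _)]
        have h1 := norm_sub_le y x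
        have h2 := hR y hy
        exact pow_le_pow_left₀ (norm_nonneg _) (by linarith) 2)
    simpa [smul_eq_mul, mul_comm] using this
  have tb : ∀ a, Tendsto (fun k => bEps ν (X k) (g k) ε (e a)) U (𝓝 (bEps ν Y h ε a)) :=
    fun a => ((tm a).inv₀ (hp_m_pos hD hνD Y h ε a).ne').smul (tv a)
  have tΦ : ∀ a, Tendsto (fun k => Φ (bEps ν (X k) (g k) ε (e a))) U (𝓝 (Φ (bEps ν Y h ε a))) := by
    intro a
    refine (hΦ _ (hp_b_mem hD hc hνD Y h ε a)).tendsto.comp ?_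
    exact tendsto_nhdsWithin_iff.2 ⟨tb a, Eventually.of_forall fun k =>
      hp_b_mem hD hc hνD _ _ _ _⟩
  have hXa : ∀ a, Tendsto (fun k => X k (e a)) U (𝓝 (Y a)) := fun a => (tendsto_pi_nhds.1 hX) a
  have tp : ∀ a b, Tendsto (fun k => if a ≠ b then
      mEps ν (X k) (g k) ε (e a) * mEps ν (X k) (g k) ε (e b) / ‖X k (e a) - X k (e b)‖ ^ 2 else 0)
      U (𝓝 (if a ≠ b then mEps ν Y h ε a * mEps ν Y h ε b / ‖Y a - Y b‖ ^ 2 else 0)) := by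
    intro a b
    split_ifs with hab
    · refine ((tm a).mul (tm b)).div ((((hXa a).sub (hXa b)).norm).pow 2) ?_
      have : Y a - Y b ≠ 0 := sub_ne_zero.2 fun h => hab (hY h)
      positivity
    · exact tendsto_const_nhds
  have tot : Tendsto (fun k =>
      (∑ a, mEps ν (X k) (g k) ε (e a) * Φ (bEps ν (X k) (g k) ε (e a)))
      + C * (1 - ∑ a, mEps ν (X k) (g k) ε (e a))
      - η * ((∑ a, ∫ y, ‖y - X k (e a)‖ ^ 2 * chiEps (X k) (g k) ε (e a) y ∂ν)
        + ∑ a, ∑ b, if a ≠ b then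
            mEps ν (X k) (g k) ε (e a) * mEps ν (X k) (g k) ε (e b)
              / ‖X k (e a) - X k (e b)‖ ^ 2 else 0)) U
      (𝓝 ((∑ a, mEps ν Y h ε a * Φ (bEps ν Y h ε a)) + C * (1 - 1)
        - η * RnEps ν Y h ε)) := by
    refine Tendsto.sub (Tendsto.add ?_ ?_) (Tendsto.const_mul _ (Tendsto.add ?_ ?_))
    · exact tendsto_finsetSum _ fun a _ => (tm a).mul (tΦ a)
    · exact (tendsto_const_nhds.sub hm).const_mul _
    · exact tendsto_finsetSum _ fun a _ => tq a
    · exact tendsto_finsetSum _ fun a _ => tendsto_finsetSum _ fun b _ => tp a b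
  have := le_of_tendsto_of_tendsto' hL tot
    (fun k => hp_upper hD hc hνD hn e Φ C hC (X k) (g k) ε η hη)
  unfold FηEps FnEps
  linarith

lemma hp_F_le {D : Set (Euc d)} (hD : IsCompact D) (hc : Convex ℝ D) {ν : Measure (Euc d)}
    [IsProbabilityMeasure ν] (hνD : ν Dᶜ = 0) {n : ℕ} (hn : 0 < n)
    (Φ : Euc d → ℝ) (C : ℝ) (hC : ∀ x ∈ D, ‖Φ x‖ ≤ C)
    (X : Fin n → Euc d) (g : Fin n → ℝ) (ε : ℝ) : FnEps ν Φ X g ε ≤ C := by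
  calc FnEps ν Φ X g ε ≤ ∑ i, mEps ν X g ε i * C := by
        refine Finset.sum_le_sum fun i _ => ?_
        exact mul_le_mul_of_nonneg_left (le_of_abs_le (hC _ (hp_b_mem hD hc hνD X g ε i)))
          (hp_m_pos hD hνD X g ε i).le
    _ = C := by rw [← Finset.sum_mul, hp_m_sum hD hνD hn, one_mul]

lemma hp_int_le_R (hD : IsCompact D) (hνD : ν Dᶜ = 0) {n : ℕ}
    (X : Fin n → Euc d) (g : Fin n → ℝ) (ε : ℝ) (i : Fin n) :
    ∫ y, ‖y - X i‖ ^ 2 * chiEps X g ε i y ∂ν ≤ RnEps ν X g ε := by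
  have h1 := Finset.single_le_sum (f := fun i => ∫ y, ‖y - X i‖ ^ 2 * chiEps X g ε i y ∂ν)
    (fun i _ => hp_R_int_nonneg X g ε i) (Finset.mem_univ i)
  have h2 : 0 ≤ ∑ i, ∑ j, if i ≠ j then
      mEps ν X g ε i * mEps ν X g ε j / ‖X i - X j‖ ^ 2 else 0 :=
    Finset.sum_nonneg fun i _ => Finset.sum_nonneg fun j _ => hp_R_term_nonneg hD hνD X g ε i j
  unfold RnEps
  linarith

lemma hp_pair_le_R (hD : IsCompact D) (hνD : ν Dᶜ = 0) {n : ℕ}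
    (X : Fin n → Euc d) (g : Fin n → ℝ) (ε : ℝ) (i j : Fin n) (hij : i ≠ j) :
    mEps ν X g ε i * mEps ν X g ε j / ‖X i - X j‖ ^ 2 ≤ RnEps ν X g ε := by
  have h1 : 0 ≤ ∑ i, ∫ y, ‖y - X i‖ ^ 2 * chiEps X g ε i y ∂ν :=
    Finset.sum_nonneg fun i _ => hp_R_int_nonneg X g ε i
  have h2 := Finset.single_le_sum (f := fun i => ∑ j, if i ≠ j then
      mEps ν X g ε i * mEps ν X g ε j / ‖X i - X j‖ ^ 2 else 0)
    (fun i _ => Finset.sum_nonneg fun j _ => hp_R_term_nonneg hD hνD X g ε i j)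
    (Finset.mem_univ i)
  have h3 := Finset.single_le_sum (f := fun j => if i ≠ j then
      mEps ν X g ε i * mEps ν X g ε j / ‖X i - X j‖ ^ 2 else 0)
    (fun j _ => hp_R_term_nonneg hD hνD X g ε i j)
    (Finset.mem_univ j)
  simp only [if_pos hij] at h3
  unfold RnEps
  linarith

lemma hp_site_bound (hD : IsCompact D) (hνD : ν Dᶜ = 0) {n : ℕ}
    (X : Fin n → Euc d) (g : Fin n → ℝ) (ε : ℝ) (i : Fin n) (K δ R : ℝ) (hK : 0 ≤ K)
    (hδ : 0 < δ)
    (hR : ∀ y ∈ D, ‖y‖ ≤ R) (hm : δ ≤ mEps ν X g ε i)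
    (hi : ∫ y, ‖y - X i‖ ^ 2 * chiEps X g ε i y ∂ν ≤ K) :
    ‖X i‖ ^ 2 ≤ 2 * (K / δ + R ^ 2) := by
  have cχ := hp_chi_cont' X g ε i
  have h1 : (‖X i‖ ^ 2 / 2 - R ^ 2) * mEps ν X g ε i ≤ K := by
    refine le_trans ?_ hi
    unfold mEps
    rw [← integral_const_mul]
    refine integral_mono_ae (hp_int hD hνD (continuous_const.mul cχ))
      (hp_int hD hνD (by fun_prop)) ?_
    filter_upwards [hp_ae hνD] with y hy
    refine mul_le_mul_of_nonneg_right ?_ (hp_chi_pos X g ε i y).le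
    have h2 := hR y hy
    have h3 : ‖X i‖ ≤ ‖y - X i‖ + ‖y‖ := by
      have := norm_sub_le y (y - X i)
      rw [sub_sub_cancel] at this
      linarith
    have h4 := norm_nonneg (y - X i)
    have h5 := norm_nonneg y
    have h6 := norm_nonneg (X i)
    nlinarith [sq_nonneg (‖y - X i‖ - ‖y‖), mul_self_le_mul_self h6 h3, mul_self_le_mul_self h5 h2]
  by_contra hcon
  push Not at hcon
  have h2 : K / δ < ‖X i‖ ^ 2 / 2 - R ^ 2 := by linarith
  have h3 : K < (‖X i‖ ^ 2 / 2 - R ^ 2) * δ := (div_lt_iff₀ hδ).1 h2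
  have h4 : 0 ≤ ‖X i‖ ^ 2 / 2 - R ^ 2 := le_trans (by positivity) h2.le
  have := mul_le_mul_of_nonneg_left hm h4
  linarith

lemma hp_weight_bound (hD : IsCompact D) (hνD : ν Dᶜ = 0) {n : ℕ}
    (X : Fin n → Euc d) (g : Fin n → ℝ) (ε : ℝ) (hε : 0 < ε) (i j : Fin n) (B δ R : ℝ)
    (hδ : 0 < δ)
    (hR : ∀ y ∈ D, ‖y‖ ≤ R) (hm : δ ≤ mEps ν X g ε i)
    (hB : ‖X j‖ ≤ B) :
    ε * Real.log δ - (R + B) ^ 2 ≤ g i - g j := by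
  have h1 : mEps ν X g ε i ≤ Real.exp ((g i - g j + (R + B) ^ 2) / ε) := by
    have : ∫ y, Real.exp ((g i - g j + (R + B) ^ 2) / ε) ∂ν
        = Real.exp ((g i - g j + (R + B) ^ 2) / ε) := by simp
    rw [← this]
    unfold mEps
    refine integral_mono_ae (hp_int hD hνD (hp_chi_cont' X g ε i)) (integrable_const _) ?_
    filter_upwards [hp_ae hνD] with y hy
    unfold chiEps
    rw [div_le_iff₀ (hp_sum_pos X g ε i y)]
    refine le_trans ?_ (mul_le_mul_of_nonneg_left (Finset.single_le_sum
      (f := fun j => Real.exp ((g j - ‖y - X j‖ ^ 2) / ε)) (fun _ _ => (Real.exp_pos _).le)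
      (Finset.mem_univ j)) (Real.exp_pos _).le)
    rw [← Real.exp_add, ← add_div]
    refine Real.exp_le_exp.2 (div_le_div_of_nonneg_right ?_ hε.le)
    have h2 := norm_sub_le y (X j)
    have h3 := hR y hy
    have h4 : ‖y - X j‖ ^ 2 ≤ (R + B) ^ 2 :=
      pow_le_pow_left₀ (norm_nonneg _) (by linarith) 2
    have h5 := sq_nonneg ‖y - X i‖
    linarith
  have h2 := (Real.log_le_iff_le_exp hδ).2 (hm.trans h1)
  rw [le_div_iff₀ hε] at h2
  linarith

lemma hp_ult {ι α : Type*} [TopologicalSpace α] (U : Ultrafilter ι) {K : Set α}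
    (hK : IsCompact K) (f : ι → α) (hf : ∀ᶠ k in (U : Filter ι), f k ∈ K) :
    ∃ x ∈ K, Tendsto f U (𝓝 x) := by
  obtain ⟨x, hx, h⟩ := hK.ultrafilter_le_nhds (U.map f) (by
    rw [le_principal_iff]; exact hf)
  exact ⟨x, hx, h⟩

lemma hp_A {D : Set (Euc d)} (hD : IsCompact D) (hc : Convex ℝ D) {ν : Measure (Euc d)}
    [IsProbabilityMeasure ν] (hνD : ν Dᶜ = 0) {n : ℕ} (hn : 0 < n)
    (Φ : Euc d → ℝ) (hΦ : ContinuousOn Φ D) (ε η : ℝ) (hε : 0 < ε) (hη : 0 < η)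
    (hne : ∃ X : Fin n → Euc d, Function.Injective X) :
    ∃ N, 0 < N ∧ N ≤ n ∧ ∃ (Y : Fin N → Euc d) (h : Fin N → ℝ), Function.Injective Y ∧
      ∀ (X : Fin n → Euc d) (g : Fin n → ℝ), Function.Injective X →
        FηEps ν Φ η X g ε ≤ FηEps ν Φ η Y h ε := by
  obtain ⟨C, hC⟩ := hD.exists_bound_of_continuousOn hΦ
  obtain ⟨R, hR⟩ := hD.isBounded.exists_norm_le
  have hF := fun X g => hp_F_le hD hc hνD hn Φ C hC X g ε
  have hR0 : ∀ (X : Fin n → Euc d) g, 0 ≤ RnEps ν X g ε := fun X g =>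
    (hp_R_int_nonneg X g ε ⟨0, hn⟩).trans (hp_int_le_R hD hνD X g ε _)
  set S : Set ℝ := {r | ∃ (X : Fin n → Euc d) (g : Fin n → ℝ), Function.Injective X ∧
    FηEps ν Φ η X g ε = r} with hS
  have hSb : BddAbove S := by
    refine ⟨C, ?_⟩
    rintro r ⟨X, g, -, rfl⟩
    unfold FηEps
    have := mul_nonneg hη.le (hR0 X g)
    linarith [hF X g]
  have hSn : S.Nonempty := by
    obtain ⟨X, hX⟩ := hne
    exact ⟨_, X, 0, hX, rfl⟩
  obtain ⟨u, -, hu, huS⟩ := exists_seq_tendsto_sSup hSn hSb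
  choose X g hXi hXF using huS
  set L := sSup S with hLdef
  set U : Ultrafilter ℕ := Filter.hyperfilter ℕ with hU
  have hL : Tendsto (fun k => FηEps ν Φ η (X k) (g k) ε) U (𝓝 L) := by
    have : (fun k => FηEps ν Φ η (X k) (g k) ε) = u := funext hXF
    rw [this]
    exact hu.mono_left Nat.hyperfilter_le_atTop
  have hmp := fun k i => hp_m_pos hD hνD (X k) (g k) ε i
  have hms := fun k => hp_m_sum hD hνD hn (X k) (g k) ε
  have hMex : ∀ i, ∃ x ∈ Set.Icc (0:ℝ) 1, Tendsto (fun k => mEps ν (X k) (g k) ε i) U (𝓝 x) := by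
    intro i
    refine hp_ult U isCompact_Icc _ (Eventually.of_forall fun k => ⟨(hmp k i).le, ?_⟩)
    rw [← hms k]
    exact Finset.single_le_sum (f := fun i => mEps ν (X k) (g k) ε i)
      (fun i _ => (hmp k i).le) (Finset.mem_univ i)
  choose M hM01 hM using hMex
  have hMsum : ∑ i, M i = 1 := by
    have h1 : Tendsto (fun k => ∑ i, mEps ν (X k) (g k) ε i) U (𝓝 (∑ i, M i)) :=
      tendsto_finsetSum _ fun i _ => hM i
    simp only [hms] at h1
    exact tendsto_nhds_unique h1 tendsto_const_nhds
  set I : Finset (Fin n) := Finset.univ.filter (fun i => 0 < M i) with hI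
  have hIsum : ∑ i ∈ I, M i = 1 := by
    rw [← hMsum, hI]
    refine Finset.sum_filter_of_ne fun i _ hi => ?_
    exact lt_of_le_of_ne (hM01 i).1 hi.symm
  have hIne : 0 < I.card := by
    rw [Finset.card_pos]
    by_contra hcon
    rw [Finset.not_nonempty_iff_eq_empty] at hcon
    rw [hcon] at hIsum
    simp at hIsum
  set e : Fin I.card ↪ Fin n := (I.orderEmbOfFin rfl).toEmbedding with he
  have heI : ∀ a, 0 < M (e a) := by
    intro a
    have : e a ∈ I := I.orderEmbOfFin_mem rfl a
    simpa [hI] using this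
  have heS : ∑ a, M (e a) = 1 := by
    rw [← Finset.sum_map Finset.univ e M, he, Finset.map_orderEmbOfFin_univ, hIsum]
  have hm : Tendsto (fun k => ∑ b, mEps ν (X k) (g k) ε (e b)) U (𝓝 1) := by
    rw [← heS]
    exact tendsto_finsetSum _ fun b _ => hM (e b)
  -- penalty bound
  set K := (C - (L - 1)) / η with hK
  have hRK : ∀ᶠ k in (U : Filter ℕ), RnEps ν (X k) (g k) ε ≤ K := by
    filter_upwards [hL.eventually (lt_mem_nhds (show L - 1 < L by linarith))] with k hk
    rw [hK, le_div_iff₀ hη]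
    unfold FηEps at hk
    linarith [hF (X k) (g k)]
  have hK0 : 0 ≤ K := by
    obtain ⟨k, hk⟩ := hRK.exists
    exact (hR0 _ _).trans hk
  have hδ : ∀ a, ∀ᶠ k in (U : Filter ℕ), M (e a) / 2 ≤ mEps ν (X k) (g k) ε (e a) := by
    intro a
    filter_upwards [(hM (e a)).eventually (lt_mem_nhds (half_lt_self (heI a)))] with k hk
    exact hk.le
  have hXb : ∀ a, ∀ᶠ k in (U : Filter ℕ),
      ‖X k (e a)‖ ≤ Real.sqrt (2 * (K / (M (e a) / 2) + R ^ 2)) := by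
    intro a
    filter_upwards [hRK, hδ a] with k h1 h2
    exact Real.le_sqrt_of_sq_le (hp_site_bound hD hνD (X k) (g k) ε (e a) K (M (e a) / 2) R hK0
      (half_pos (heI a)) hR h2 ((hp_int_le_R hD hνD _ _ _ _).trans h1))
  have hYex : ∀ a, ∃ y, Tendsto (fun k => X k (e a)) U (𝓝 y) := by
    intro a
    obtain ⟨y, -, hy⟩ := hp_ult U (isCompact_closedBall (0 : Euc d) _) (fun k => X k (e a))
      ((hXb a).mono fun k hk => mem_closedBall_zero_iff.2 hk)
    exact ⟨y, hy⟩
  choose Y hY using hYex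
  set a0 : Fin I.card := ⟨0, hIne⟩ with ha0
  have hwb : ∀ a b, ∃ T : ℝ, ∀ᶠ k in (U : Filter ℕ), T ≤ g k (e a) - g k (e b) := by
    intro a b
    refine ⟨ε * Real.log (M (e a) / 2)
      - (R + Real.sqrt (2 * (K / (M (e b) / 2) + R ^ 2))) ^ 2, ?_⟩
    · filter_upwards [hδ a, hXb b] with k h1 h2
      exact hp_weight_bound hD hνD (X k) (g k) ε hε (e a) (e b) _ _ R (half_pos (heI a)) hR h1 h2
  have hhex : ∀ a, ∃ t, Tendsto (fun k => g k (e a) - g k (e a0)) U (𝓝 t) := by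
    intro a
    obtain ⟨T1, h1⟩ := hwb a a0
    obtain ⟨T2, h2⟩ := hwb a0 a
    obtain ⟨t, -, ht⟩ := hp_ult U (isCompact_Icc (a := T1) (b := -T2))
      (fun k => g k (e a) - g k (e a0)) (by
        filter_upwards [h1, h2] with k h1 h2
        exact ⟨h1, by linarith⟩)
    exact ⟨t, ht⟩
  choose h hh using hhex
  have hYi : Function.Injective Y := by
    intro a b hab
    by_contra hne
    have hne' : e a ≠ e b := fun h => hne (e.injective h)
    have h1 : Tendsto (fun k => mEps ν (X k) (g k) ε (e a) * mEps ν (X k) (g k) ε (e b)) U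
        (𝓝 (M (e a) * M (e b))) := (hM _).mul (hM _)
    have h2 : Tendsto (fun k => K * ‖X k (e a) - X k (e b)‖ ^ 2) U (𝓝 (K * ‖Y a - Y b‖ ^ 2)) :=
      ((((hY a).sub (hY b)).norm).pow 2).const_mul K
    have h3 : M (e a) * M (e b) ≤ K * ‖Y a - Y b‖ ^ 2 := by
      refine le_of_tendsto_of_tendsto h1 h2 ?_
      filter_upwards [hRK] with k hk
      have h4 := (hp_pair_le_R hD hνD (X k) (g k) ε (e a) (e b) hne').trans hk
      have h5 : X k (e a) - X k (e b) ≠ 0 := sub_ne_zero.2 fun h => hne' (hXi k h)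
      rwa [div_le_iff₀ (by positivity)] at h4
    have h4 := mul_pos (heI a) (heI b)
    rw [hab] at h3
    simp at h3
    linarith
  refine ⟨I.card, hIne, by simpa using I.card_le_univ, Y, h, hYi, fun X' g' hX' => ?_⟩
  have h1 : FηEps ν Φ η X' g' ε ≤ L := le_csSup hSb ⟨X', g', hX', rfl⟩
  exact h1.trans (hp_core hD hc hνD hn e Φ hΦ X g ε η hη (fun k => g k (e a0)) Y h hYi
    (tendsto_pi_nhds.2 hY) (tendsto_pi_nhds.2 hh) hm L hL)

lemma hp_B {D : Set (Euc d)} (hD : IsCompact D) (hc : Convex ℝ D) {ν : Measure (Euc d)}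
    [IsProbabilityMeasure ν] (hνD : ν Dᶜ = 0)
    (Φ : Euc d → ℝ) (hΦ : ContinuousOn Φ D) (ε η : ℝ) (hε : 0 < ε) (hη : 0 < η) (l : ℕ) :
    ∃ N, 0 < N ∧ N ≤ l + 1 ∧ ∃ (Y : Fin N → Euc d) (h : Fin N → ℝ), Function.Injective Y ∧
      ∀ n, 0 < n → n ≤ l + 1 → ∀ (X : Fin n → Euc d) (g : Fin n → ℝ), Function.Injective X →
        FηEps ν Φ η X g ε ≤ FηEps ν Φ η Y h ε := by
  induction l with
  | zero =>
    obtain ⟨N, h1, h2, Y, h, hY, hmax⟩ := hp_A hD hc hνD (n := 1) one_pos Φ hΦ ε η hε hη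
      ⟨fun _ => 0, Function.injective_of_subsingleton _⟩
    refine ⟨N, h1, h2, Y, h, hY, fun n hn hn1 => ?_⟩
    obtain rfl : n = 1 := by omega
    exact hmax
  | succ l ih =>
    obtain ⟨N, h1, h2, Y, h, hY, hmax⟩ := ih
    by_cases hne : ∃ X : Fin (l + 1 + 1) → Euc d, Function.Injective X
    · obtain ⟨N', h1', h2', Y', h', hY', hmax'⟩ := hp_A hD hc hνD (n := l + 1 + 1)
        (Nat.succ_pos _) Φ hΦ ε η hε hη hne
      rcases le_total (FηEps ν Φ η Y h ε) (FηEps ν Φ η Y' h' ε) with hle | hle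
      · refine ⟨N', h1', h2', Y', h', hY', fun n hn hn1 X g hX => ?_⟩
        rcases Nat.lt_or_ge n (l + 1 + 1) with hlt | hge
        · exact (hmax n hn (by omega) X g hX).trans hle
        · obtain rfl : n = l + 1 + 1 := by omega
          exact hmax' X g hX
      · refine ⟨N, h1, by omega, Y, h, hY, fun n hn hn1 X g hX => ?_⟩
        rcases Nat.lt_or_ge n (l + 1 + 1) with hlt | hge
        · exact hmax n hn (by omega) X g hX
        · obtain rfl : n = l + 1 + 1 := by omega
          exact (hmax' X g hX).trans hle
    · refine ⟨N, h1, by omega, Y, h, hY, fun n hn hn1 X g hX => ?_⟩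
      rcases Nat.lt_or_ge n (l + 1 + 1) with hlt | hge
      · exact hmax n hn (by omega) X g hX
      · obtain rfl : n = l + 1 + 1 := by omega
        exact absurd ⟨X, hX⟩ hne

end Helpers

/-- for every number of sites `l` there is `n ≤ l` such that the
entropy-regularized penalized functional `F_n^{η,ε}` admits a maximizer `(X*, g*)` over
`n`-tuples of pairwise distinct sites and weights, with all regularized cell masses positive,
whose value dominates the supremum of `F_l^{η,ε}`. -/
theorem entropy_penalized_functional_attains_max
    {d : ℕ} (D : Set (Euc d)) (hD : IsCompact D) (hDconv : Convex ℝ D)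
    (ν : Measure (Euc d)) [IsProbabilityMeasure ν] (hνD : ν Dᶜ = 0)
    (hac : ν ≪ (volume : Measure (Euc d)))
    (Φ : Euc d → ℝ) (hΦ : ContinuousOn Φ D)
    (ε : ℝ) (hε : 0 < ε) (η : ℝ) (hη : 0 < η) (l : ℕ) (hl : 0 < l) :
    ∃ n, 0 < n ∧ n ≤ l ∧
      ∃ (Xs : Fin n → Euc d) (gs : Fin n → ℝ), Function.Injective Xs ∧
        (∀ i, 0 < mEps ν Xs gs ε i) ∧
        (∀ (X : Fin n → Euc d) (g : Fin n → ℝ), Function.Injective X →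
          FηEps ν Φ η X g ε ≤ FηEps ν Φ η Xs gs ε) ∧
        (∀ (X : Fin l → Euc d) (g : Fin l → ℝ), Function.Injective X →
          FηEps ν Φ η X g ε ≤ FηEps ν Φ η Xs gs ε) := by
  obtain ⟨l, rfl⟩ : ∃ l', l = l' + 1 := ⟨l - 1, by omega⟩
  obtain ⟨N, h1, h2, Y, h, hY, hmax⟩ := hp_B hD hDconv hνD Φ hΦ ε η hε hη l
  exact ⟨N, h1, h2, Y, h, hY, hp_m_pos hD hνD Y h ε, hmax N h1 h2, hmax (l + 1) hl le_rfl⟩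
end
end
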